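/- Fix θ₀ = (γ₀, μ₀, σ₀) ∈ (−1/2, ∞) × ℝ × (0, ∞) and define m_θ(x) = 2 log((p_θ(x) + p_{θ₀}(x))/(2 p_{θ₀}(x))) for x with p_{θ₀}(x) > 0, where p_θ is the GEV density. Then for every h ∈ ℝ³ and every family (h_t) in ℝ³ with h_t → h as t → 0, one has t^{−2} ∫ (m_{θ₀ + t h_t} − m_{θ₀}) dP_{θ₀} → −(1/4) hᵀ I_{θ₀} h as t → 0, where I_{θ₀} = ∫ ℓ̇_{θ₀} ℓ̇_{θ₀}ᵀ dP_{θ₀} is the Fisher information matrix of the GEV family at θ₀. -/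

import Mathlib

open MeasureTheory Filter Set Matrix

/-- `u_γ(z)` for the GEV family. -/
noncomputable def gevU (γ z : ℝ) : ℝ :=
  if γ = 0 then Real.exp (-z) else (1 + γ * z) ^ (-γ⁻¹)

/-- Lebesgue density of the GEV distribution with parameter `θ = (γ, μ, σ)`. -/
noncomputable def gevDensity (θ : ℝ × ℝ × ℝ) (x : ℝ) : ℝ :=
  if 0 < θ.2.2 + θ.1 * (x - θ.2.1) then
    (θ.2.2)⁻¹ * Real.exp (-(gevU θ.1 ((x - θ.2.1) / θ.2.2))) *
      gevU θ.1 ((x - θ.2.1) / θ.2.2) ^ (θ.1 + 1)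
  else 0

/-- The GEV probability measure with parameter `θ`. -/
noncomputable def gevMeasure (θ : ℝ × ℝ × ℝ) : Measure ℝ :=
  MeasureTheory.volume.withDensity fun x => ENNReal.ofReal (gevDensity θ x)

/-- The modified criterion function `m_θ = 2 log((p_θ + p_{θ₀})/(2 p_{θ₀}))`
relative to the reference parameter `θ₀`. -/
noncomputable def gevM (θ₀ θ : ℝ × ℝ × ℝ) (x : ℝ) : ℝ :=
  2 * Real.log ((gevDensity θ x + gevDensity θ₀ x) / (2 * gevDensity θ₀ x))

/-- `D(γ, z) = ∫₀^z t / (1 + γ t)² dt = ∂_γ log u_γ(z)`. -/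
noncomputable def gevDGamma (γ z : ℝ) : ℝ := ∫ t in (0:ℝ)..z, t / (1 + γ * t) ^ 2

/-- `∂_γ ℓ_θ(x)` on the support. -/
noncomputable def gevScoreGamma (θ : ℝ × ℝ × ℝ) (x : ℝ) : ℝ :=
  (1 - gevU θ.1 ((x - θ.2.1) / θ.2.2)) * gevDGamma θ.1 ((x - θ.2.1) / θ.2.2)
    - ((x - θ.2.1) / θ.2.2) / (1 + θ.1 * ((x - θ.2.1) / θ.2.2))

/-- `∂_μ ℓ_θ(x)` on the support. -/
noncomputable def gevScoreMu (θ : ℝ × ℝ × ℝ) (x : ℝ) : ℝ :=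
  (θ.1 + 1 - gevU θ.1 ((x - θ.2.1) / θ.2.2))
    / (θ.2.2 * (1 + θ.1 * ((x - θ.2.1) / θ.2.2)))

/-- `∂_σ ℓ_θ(x)` on the support. -/
noncomputable def gevScoreSigma (θ : ℝ × ℝ × ℝ) (x : ℝ) : ℝ :=
  ((1 - gevU θ.1 ((x - θ.2.1) / θ.2.2)) * ((x - θ.2.1) / θ.2.2) - 1)
    / (θ.2.2 * (1 + θ.1 * ((x - θ.2.1) / θ.2.2)))

/-- The GEV score vector `ℓ̇_θ(x)`, set to `0` off the support. -/
noncomputable def gevScore (θ : ℝ × ℝ × ℝ) (x : ℝ) : Fin 3 → ℝ :=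
  if 0 < θ.2.2 + θ.1 * (x - θ.2.1) then
    ![gevScoreGamma θ x, gevScoreMu θ x, gevScoreSigma θ x]
  else 0

/-- The Fisher information matrix `I_θ = ∫ ℓ̇_θ ℓ̇_θᵀ dP_θ` of the GEV family. -/
noncomputable def gevFisher (θ : ℝ × ℝ × ℝ) : Matrix (Fin 3) (Fin 3) ℝ :=
  Matrix.of fun i j => ∫ x, gevScore θ x i * gevScore θ x j ∂(gevMeasure θ)

/-- Coordinates of a GEV parameter vector. -/
def toVec3 (θ : ℝ × ℝ × ℝ) : Fin 3 → ℝ := ![θ.1, θ.2.1, θ.2.2]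

/-!
Put `w = √(q / p) - 1`. Since `(q + p) / (2 p) = 1 + w + w² / 2` and `2 log (1 + w + w² / 2)` is
`2 w` up to a cubic error, for probability densities `p`, `q` the integral of
`2 log ((q + p) / (2 p))` against `p` is `-∫ (√q - √p)²` up to that error. It remains to show that
`(√p_{θ₀ + t h_t} - √p_{θ₀}) / t` converges in `L²` to the derivative of `θ ↦ √p_θ` at `θ₀` in the
direction `h`, whose square integrates to `¼ hᵀ I_{θ₀} h`.

Pointwise convergence on the support is differentiability, so by Fatou's lemma it is enough to bound
the limit superior of the squared `L²` norms. The difference quotient is an average of derivatives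
along the segment from `θ₀` to `θ₀ + t h_t` (a given `x` crosses the moving endpoint of the support
at finitely many points of the segment, and `√p_θ(x)` stays continuous there because `γ > -1`), so
Jensen's inequality bounds its squared norm by the largest Fisher information along the segment.
In the coordinate `l = log u` the law of the observation does not depend on `θ`, and dominated
convergence shows that the Fisher information is continuous where `γ > -1/2`.
-/

section GeneralizedDominatedConvergence

variable {α ι : Type*} [MeasurableSpace α] {μ : Measure α} {l : Filter ι}
  [l.IsCountablyGenerated] {f F : ι → α → ℝ} {g G : α → ℝ}

lemma eventually_integral_sub_lt_integral_of_tendsto (hf_meas : ∀ i, AEMeasurable (f i) μ)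
    (hf_nonneg : ∀ i x, 0 ≤ f i x) (hf_int : ∀ᶠ i in l, Integrable (f i) μ)
    (hg : Integrable g μ) (hlim : ∀ᵐ x ∂μ, Tendsto (fun i ↦ f i x) l (nhds (g x)))
    {ε : ℝ} (hε : 0 < ε) : ∀ᶠ i in l, ∫ x, g x ∂μ - ε < ∫ x, f i x ∂μ := by
  rcases l.eq_or_neBot with rfl | _
  · exact eventually_bot
  rcases lt_or_ge (∫ x, g x ∂μ - ε) 0 with hneg | hpos
  · exact Eventually.of_forall fun i ↦ hneg.trans_le (integral_nonneg (hf_nonneg i))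
  have hg_nonneg : 0 ≤ᵐ[μ] g := by
    filter_upwards [hlim] with x hx using ge_of_tendsto' hx fun i ↦ hf_nonneg i x
  have hfatou : ENNReal.ofReal (∫ x, g x ∂μ - ε)
      < liminf (fun i ↦ ∫⁻ x, ENNReal.ofReal (f i x) ∂μ) l :=
    calc ENNReal.ofReal (∫ x, g x ∂μ - ε)
        < ENNReal.ofReal (∫ x, g x ∂μ) := by
          rw [ENNReal.ofReal_lt_ofReal_iff (by linarith)]; linarith
      _ = ∫⁻ x, ENNReal.ofReal (g x) ∂μ := ofReal_integral_eq_lintegral_ofReal hg hg_nonneg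
      _ = ∫⁻ x, liminf (fun i ↦ ENNReal.ofReal (f i x)) l ∂μ := by
          refine lintegral_congr_ae ?_
          filter_upwards [hlim] with x hx
          exact ((ENNReal.continuous_ofReal.tendsto _).comp hx).liminf_eq.symm
      _ ≤ _ := lintegral_liminf_le' fun i ↦ (hf_meas i).ennreal_ofReal
  filter_upwards [eventually_lt_of_lt_liminf hfatou, hf_int] with i hi hint
  rw [← ofReal_integral_eq_lintegral_ofReal hint (ae_of_all _ (hf_nonneg i)),
    ENNReal.ofReal_lt_ofReal_iff'] at hi
  exact hi.1

lemma tendsto_integral_of_eventually_integral_lt_add (hf_meas : ∀ i, AEMeasurable (f i) μ)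
    (hf_nonneg : ∀ i x, 0 ≤ f i x) (hf_int : ∀ᶠ i in l, Integrable (f i) μ)
    (hg : Integrable g μ) (hlim : ∀ᵐ x ∂μ, Tendsto (fun i ↦ f i x) l (nhds (g x)))
    (hupper : ∀ ε > 0, ∀ᶠ i in l, ∫ x, f i x ∂μ < ∫ x, g x ∂μ + ε) :
    Tendsto (fun i ↦ ∫ x, f i x ∂μ) l (nhds (∫ x, g x ∂μ)) := by
  refine Metric.tendsto_nhds.2 fun ε hε ↦ ?_
  filter_upwards [hupper ε hε, eventually_integral_sub_lt_integral_of_tendsto hf_meas hf_nonneg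
    hf_int hg hlim hε] with i hi_lt hi_gt
  rw [Real.dist_eq, abs_lt]
  constructor <;> linarith

lemma eventually_integral_lt_of_abs_le_of_tendsto (hf_meas : ∀ i, AEMeasurable (f i) μ)
    (hF_int : ∀ᶠ i in l, Integrable (F i) μ) (hF_meas : ∀ i, AEMeasurable (F i) μ)
    (hG : Integrable G μ) (hfF : ∀ i x, |f i x| ≤ F i x)
    (hFlim : ∀ᵐ x ∂μ, Tendsto (fun i ↦ F i x) l (nhds (G x)))
    (hFint_lim : Tendsto (fun i ↦ ∫ x, F i x ∂μ) l (nhds (∫ x, G x ∂μ)))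
    (hflim : ∀ᵐ x ∂μ, Tendsto (fun i ↦ f i x) l (nhds 0)) {ε : ℝ} (hε : 0 < ε) :
    ∀ᶠ i in l, ∫ x, f i x ∂μ < ε := by
  have hf_int : ∀ᶠ i in l, Integrable (f i) μ := by
    filter_upwards [hF_int] with i hi
    exact hi.mono' (hf_meas i).aestronglyMeasurable (ae_of_all _ (hfF i))
  have hdiff_int : ∀ᶠ i in l, Integrable (fun x ↦ F i x - f i x) μ := by
    filter_upwards [hF_int, hf_int] with i hFi hfi using hFi.sub hfi
  have hdiff_lim : ∀ᵐ x ∂μ, Tendsto (fun i ↦ F i x - f i x) l (nhds (G x)) := by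
    filter_upwards [hFlim, hflim] with x hFx hfx using by simpa using hFx.sub hfx
  have hlower := eventually_integral_sub_lt_integral_of_tendsto
    (fun i ↦ (hF_meas i).sub (hf_meas i))
    (fun i x ↦ sub_nonneg.2 ((le_abs_self _).trans (hfF i x))) hdiff_int hG hdiff_lim (half_pos hε)
  filter_upwards [hlower, hF_int, hf_int,
    hFint_lim.eventually_lt_const (lt_add_of_pos_right _ (half_pos hε))] with i hi hFi hfi hFlt
  rw [integral_sub' hFi hfi] at hi
  linarith

lemma tendsto_integral_zero_of_abs_le_of_tendsto (hf_meas : ∀ i, AEMeasurable (f i) μ)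
    (hF_int : ∀ᶠ i in l, Integrable (F i) μ) (hF_meas : ∀ i, AEMeasurable (F i) μ)
    (hG : Integrable G μ) (hfF : ∀ i x, |f i x| ≤ F i x)
    (hFlim : ∀ᵐ x ∂μ, Tendsto (fun i ↦ F i x) l (nhds (G x)))
    (hFint_lim : Tendsto (fun i ↦ ∫ x, F i x ∂μ) l (nhds (∫ x, G x ∂μ)))
    (hflim : ∀ᵐ x ∂μ, Tendsto (fun i ↦ f i x) l (nhds 0)) :
    Tendsto (fun i ↦ ∫ x, f i x ∂μ) l (nhds 0) := by
  have hneglim : ∀ᵐ x ∂μ, Tendsto (fun i ↦ -f i x) l (nhds 0) := by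
    filter_upwards [hflim] with x hx using by simpa using hx.neg
  refine Metric.tendsto_nhds.2 fun ε hε ↦ ?_
  filter_upwards [
    eventually_integral_lt_of_abs_le_of_tendsto hf_meas hF_int hF_meas hG hfF hFlim hFint_lim
      hflim hε,
    eventually_integral_lt_of_abs_le_of_tendsto (fun i ↦ (hf_meas i).neg) hF_int hF_meas hG
      (fun i x ↦ by simpa using hfF i x) hFlim hFint_lim hneglim hε] with i hi_lt hi_gt
  simp only [Pi.neg_apply, integral_neg] at hi_gt
  rw [Real.dist_0_eq_abs, abs_lt]
  constructor <;> linarith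

end GeneralizedDominatedConvergence

section LogRemainder

/-- The remainder in `2 log (1 + w + w² / 2) = 2 w + O(w³)`. With `w = √(q/p) - 1` the argument of
the logarithm is `(q + p) / (2 p)`, so that this is the error term in the expansion of
`2 log ((q + p) / (2 p))` in terms of square roots of densities. -/
noncomputable def logRemainder (w : ℝ) : ℝ := 2 * Real.log (1 + w + w ^ 2 / 2) - 2 * w

lemma half_le_one_add_add_sq_div_two (w : ℝ) : 1 / 2 ≤ 1 + w + w ^ 2 / 2 := by
  nlinarith [sq_nonneg (1 + w)]

lemma hasDerivAt_logRemainder (w : ℝ) :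
    HasDerivAt logRemainder (-(w ^ 2 / (1 + w + w ^ 2 / 2))) w := by
  have hpos : 1 + w + w ^ 2 / 2 ≠ 0 := by linarith [half_le_one_add_add_sq_div_two w]
  have harg : HasDerivAt (fun w : ℝ ↦ 1 + w + w ^ 2 / 2) (1 + w) w := by
    refine (((hasDerivAt_id w).const_add 1).add
      ((hasDerivAt_pow 2 w).div_const 2)).congr_deriv ?_
    simp
  refine (((harg.log hpos).const_mul 2).sub ((hasDerivAt_id w).const_mul 2)).congr_deriv ?_
  rw [mul_div_assoc', div_sub' hpos, ← neg_div]
  ring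

lemma measurable_logRemainder : Measurable logRemainder := by
  unfold logRemainder; fun_prop

lemma abs_logRemainder_le_of_forall_le {w C : ℝ}
    (hC : ∀ s, |s| ≤ |w| → s ^ 2 / (1 + s + s ^ 2 / 2) ≤ C) : |logRemainder w| ≤ C * |w| := by
  have hderiv_le : ∀ s ∈ uIcc 0 w, ‖-(s ^ 2 / (1 + s + s ^ 2 / 2))‖ ≤ C := by
    intro s hs
    have hden := half_le_one_add_add_sq_div_two s
    rw [norm_neg, Real.norm_of_nonneg (by positivity)]
    exact hC s (by simpa using abs_sub_left_of_mem_uIcc hs)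
  simpa [logRemainder] using (convex_uIcc 0 w).norm_image_sub_le_of_norm_hasDerivWithin_le
    (fun s _ ↦ (hasDerivAt_logRemainder s).hasDerivWithinAt) hderiv_le left_mem_uIcc right_mem_uIcc

lemma abs_logRemainder_le_three_mul_sq (w : ℝ) : |logRemainder w| ≤ 3 * w ^ 2 := by
  have hderiv_le (s : ℝ) : s ^ 2 / (1 + s + s ^ 2 / 2) ≤ 3 * |s| := by
    have hden := half_le_one_add_add_sq_div_two s
    rw [div_le_iff₀ (by linarith), ← sq_abs s]
    have : |s| ≤ 3 * (1 + s + |s| ^ 2 / 2) := by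
      rcases abs_cases s with ⟨h, _⟩ | ⟨h, _⟩ <;> rw [h]
      · nlinarith
      · nlinarith [sq_nonneg (s + 4 / 3)]
    nlinarith [abs_nonneg s]
  calc |logRemainder w| ≤ 3 * |w| * |w| :=
        abs_logRemainder_le_of_forall_le fun s hs ↦ (hderiv_le s).trans (by linarith)
    _ = 3 * w ^ 2 := by rw [mul_assoc, abs_mul_abs_self, sq]

lemma abs_logRemainder_le_two_mul_sq_mul_abs (w : ℝ) : |logRemainder w| ≤ 2 * w ^ 2 * |w| :=
  abs_logRemainder_le_of_forall_le fun s hs ↦ by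
    have hden := half_le_one_add_add_sq_div_two s
    rw [div_le_iff₀ (by linarith)]
    nlinarith [sq_nonneg w, sq_le_sq.2 hs]

lemma mul_two_log_eq_sqrt_expansion {p q : ℝ} (hp : 0 ≤ p) (hq : 0 ≤ q) :
    p * (2 * Real.log ((q + p) / (2 * p))) =
      -(√q - √p) ^ 2 + (q - p) + p * logRemainder (√q / √p - 1) := by
  rcases hp.eq_or_lt with rfl | hp_pos
  · simp [Real.sq_sqrt hq]
  have hsqrt : √p ≠ 0 := (Real.sqrt_pos.2 hp_pos).ne'
  have hp_sq : √p ^ 2 = p := Real.sq_sqrt hp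
  have hq_sq : √q ^ 2 = q := Real.sq_sqrt hq
  have harg : (q + p) / (2 * p) = 1 + (√q / √p - 1) + (√q / √p - 1) ^ 2 / 2 := by
    nth_rewrite 1 2 [← hp_sq]
    nth_rewrite 1 [← hq_sq]
    field_simp [hsqrt]
    ring
  have hcross : p * (√q / √p) = √q * √p := by
    nth_rewrite 1 [← hp_sq]
    field_simp [hsqrt]
  rw [logRemainder, ← harg]
  linear_combination hp_sq + hq_sq + 2 * hcross

end LogRemainder

section HellingerExpansion

lemma mul_sq_sqrt_div_sqrt_sub_one {p : ℝ} (hp : 0 < p) (q : ℝ) :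
    p * (√q / √p - 1) ^ 2 = (√q - √p) ^ 2 := by
  have hsqrt : √p ≠ 0 := (Real.sqrt_pos.2 hp).ne'
  rw [div_sub_one hsqrt, div_pow, Real.sq_sqrt hp.le, mul_div_cancel₀ _ hp.ne']

lemma abs_mul_logRemainder_sqrt_le {p : ℝ} (hp : 0 ≤ p) (q : ℝ) :
    |p * logRemainder (√q / √p - 1)| ≤ 3 * (√q - √p) ^ 2 := by
  rcases hp.eq_or_lt with rfl | hp_pos
  · simp only [zero_mul, abs_zero]; positivity
  rw [← mul_sq_sqrt_div_sqrt_sub_one hp_pos, abs_mul, abs_of_pos hp_pos]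
  linarith [mul_le_mul_of_nonneg_left (abs_logRemainder_le_three_mul_sq (√q / √p - 1)) hp]

lemma abs_mul_logRemainder_sqrt_le_mul_abs {p : ℝ} (hp : 0 < p) (q : ℝ) :
    |p * logRemainder (√q / √p - 1)| ≤ 2 * (√q - √p) ^ 2 * |√q / √p - 1| := by
  rw [← mul_sq_sqrt_div_sqrt_sub_one hp, abs_mul, abs_of_pos hp]
  linarith [mul_le_mul_of_nonneg_left
    (abs_logRemainder_le_two_mul_sq_mul_abs (√q / √p - 1)) hp.le]

lemma tendsto_mul_logRemainder_sqrt_div_sq {ι : Type*} {l : Filter ι} {p g : ℝ} {q τ : ι → ℝ}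
    (hp : 0 < p) (hτ : Tendsto τ l (nhdsWithin 0 {0}ᶜ))
    (hlim : Tendsto (fun i ↦ (√(q i) - √p) / τ i) l (nhds g)) :
    Tendsto (fun i ↦ p * logRemainder (√(q i) / √p - 1) / τ i ^ 2) l (nhds 0) := by
  have hsqrt : √p ≠ 0 := (Real.sqrt_pos.2 hp).ne'
  have hratio : Tendsto (fun i ↦ √(q i) / √p - 1) l (nhds 0) := by
    have hprod := (hlim.mul (tendsto_nhdsWithin_iff.1 hτ).1).div_const √p
    rw [mul_zero, zero_div] at hprod
    refine hprod.congr' ?_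
    filter_upwards [(tendsto_nhdsWithin_iff.1 hτ).2] with i (hi : τ i ≠ 0)
    rw [div_mul_cancel₀ _ hi, div_sub_one hsqrt]
  have hbound : Tendsto (fun i ↦ 2 * ((√(q i) - √p) / τ i) ^ 2 * |√(q i) / √p - 1|) l (nhds 0) := by
    simpa using ((hlim.pow 2).const_mul 2).mul hratio.abs
  refine squeeze_zero_norm (fun i ↦ ?_) hbound
  rw [norm_div, norm_pow, Real.norm_eq_abs (τ i), sq_abs, div_pow, mul_div_assoc',
    div_mul_eq_mul_div]
  gcongr
  exact abs_mul_logRemainder_sqrt_le_mul_abs hp (q i)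

variable {α ι : Type*} [MeasurableSpace α] {μ : Measure α} {l : Filter ι}
  {p g : α → ℝ} {q : ι → α → ℝ} {τ : ι → ℝ}

lemma integrable_sq_sqrt_sub_sqrt {f : α → ℝ} (hf : Integrable f μ) (hp : Integrable p μ) :
    Integrable (fun x ↦ (√(f x) - √(p x)) ^ 2) μ := by
  have hmeas : AEStronglyMeasurable (fun x ↦ (√(f x) - √(p x)) ^ 2) μ :=
    ((hf.aemeasurable.sqrt.sub hp.aemeasurable.sqrt).pow_const 2).aestronglyMeasurable
  refine (hf.abs.add hp.abs).mono' hmeas (ae_of_all _ fun x ↦ ?_)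
  have sq_sqrt_le (r : ℝ) : √r ^ 2 ≤ |r| := by
    rcases le_total 0 r with hr | hr
    · rw [Real.sq_sqrt hr, abs_of_nonneg hr]
    · simp [Real.sqrt_eq_zero_of_nonpos hr]
  rw [Real.norm_of_nonneg (sq_nonneg _), Pi.add_apply]
  nlinarith [sq_sqrt_le (f x), sq_sqrt_le (p x),
    mul_nonneg (Real.sqrt_nonneg (f x)) (Real.sqrt_nonneg (p x))]

variable [l.IsCountablyGenerated]

lemma tendsto_setIntegral_sq_sqrt_sub_sqrt_div (hp : Measurable p) (hq : ∀ i, Measurable (q i))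
    (hp_int : Integrable p μ) (hq_int : ∀ᶠ i in l, Integrable (q i) μ)
    (hlim : ∀ x, 0 < p x → Tendsto (fun i ↦ (√(q i x) - √(p x)) / τ i) l (nhds (g x)))
    (hg : Integrable (fun x ↦ g x ^ 2) μ) (hg_supp : ∀ x, ¬ 0 < p x → g x = 0)
    (hupper : ∀ ε > 0, ∀ᶠ i in l,
      ∫ x, ((√(q i x) - √(p x)) / τ i) ^ 2 ∂μ < ∫ x, g x ^ 2 ∂μ + ε) :
    Tendsto (fun i ↦ ∫ x in {x | 0 < p x}, ((√(q i x) - √(p x)) / τ i) ^ 2 ∂μ) l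
      (nhds (∫ x in {x | 0 < p x}, g x ^ 2 ∂μ)) := by
  have hsupp : MeasurableSet {x | 0 < p x} := measurableSet_lt measurable_const hp
  have hint : ∀ᶠ i in l, Integrable (fun x ↦ ((√(q i x) - √(p x)) / τ i) ^ 2) μ := by
    filter_upwards [hq_int] with i hi
    simpa only [div_pow] using (integrable_sq_sqrt_sub_sqrt hi hp_int).div_const (τ i ^ 2)
  refine tendsto_integral_of_eventually_integral_lt_add (fun i ↦ ?_) (fun i x ↦ sq_nonneg _)
    (hint.mono fun i hi ↦ hi.restrict) hg.restrict
    (ae_restrict_of_forall_mem hsupp fun x hx ↦ (hlim x hx).pow 2) fun ε hε ↦ ?_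
  · exact ((((hq i).sqrt.sub hp.sqrt).div_const _).pow_const 2).aemeasurable
  · filter_upwards [hupper ε hε, hint] with i hi_lt hi_int
    have hg_set : ∫ x in {x | 0 < p x}, g x ^ 2 ∂μ = ∫ x, g x ^ 2 ∂μ :=
      setIntegral_eq_integral_of_forall_compl_eq_zero fun x hx ↦ by simp [hg_supp x hx]
    rw [hg_set]
    exact (setIntegral_le_integral hi_int (ae_of_all _ fun x ↦ sq_nonneg _)).trans_lt hi_lt

lemma tendsto_integral_sq_sqrt_sub_sqrt_div (hp : Measurable p) (hq : ∀ i, Measurable (q i))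
    (hp_int : Integrable p μ) (hq_int : ∀ᶠ i in l, Integrable (q i) μ)
    (hlim : ∀ x, 0 < p x → Tendsto (fun i ↦ (√(q i x) - √(p x)) / τ i) l (nhds (g x)))
    (hg : Integrable (fun x ↦ g x ^ 2) μ) (hg_supp : ∀ x, ¬ 0 < p x → g x = 0)
    (hupper : ∀ ε > 0, ∀ᶠ i in l,
      ∫ x, ((√(q i x) - √(p x)) / τ i) ^ 2 ∂μ < ∫ x, g x ^ 2 ∂μ + ε) :
    Tendsto (fun i ↦ ∫ x, ((√(q i x) - √(p x)) / τ i) ^ 2 ∂μ) l (nhds (∫ x, g x ^ 2 ∂μ)) := by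
  have hset := tendsto_setIntegral_sq_sqrt_sub_sqrt_div hp hq hp_int hq_int hlim hg hg_supp hupper
  have hg_set : ∫ x in {x | 0 < p x}, g x ^ 2 ∂μ = ∫ x, g x ^ 2 ∂μ :=
    setIntegral_eq_integral_of_forall_compl_eq_zero fun x hx ↦ by simp [hg_supp x hx]
  rw [hg_set] at hset
  refine Metric.tendsto_nhds.2 fun ε hε ↦ ?_
  filter_upwards [hupper ε hε, hset.eventually_const_lt (sub_lt_self _ hε), hq_int]
    with i hi_lt hi_gt hi_int
  have hint : Integrable (fun x ↦ ((√(q i x) - √(p x)) / τ i) ^ 2) μ := by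
    simpa only [div_pow] using (integrable_sq_sqrt_sub_sqrt hi_int hp_int).div_const (τ i ^ 2)
  have hset_le := setIntegral_le_integral (s := {x | 0 < p x}) hint
    (ae_of_all _ fun x ↦ sq_nonneg _)
  rw [Real.dist_eq, abs_lt]
  constructor <;> linarith

lemma tendsto_integral_mul_logRemainder_sqrt_div_sq (hp : Measurable p)
    (hq : ∀ i, Measurable (q i)) (hp_nonneg : ∀ x, 0 ≤ p x) (hp_int : Integrable p μ)
    (hq_int : ∀ᶠ i in l, Integrable (q i) μ) (hτ : Tendsto τ l (nhdsWithin 0 {0}ᶜ))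
    (hlim : ∀ x, 0 < p x → Tendsto (fun i ↦ (√(q i x) - √(p x)) / τ i) l (nhds (g x)))
    (hg : Integrable (fun x ↦ g x ^ 2) μ) (hg_supp : ∀ x, ¬ 0 < p x → g x = 0)
    (hupper : ∀ ε > 0, ∀ᶠ i in l,
      ∫ x, ((√(q i x) - √(p x)) / τ i) ^ 2 ∂μ < ∫ x, g x ^ 2 ∂μ + ε) :
    Tendsto (fun i ↦ ∫ x, p x * logRemainder (√(q i x) / √(p x) - 1) / τ i ^ 2 ∂μ) l
      (nhds 0) := by
  have hsupp : MeasurableSet {x | 0 < p x} := measurableSet_lt measurable_const hp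
  have hoff (i : ι) (x : α) (hx : x ∉ {x | 0 < p x}) :
      p x * logRemainder (√(q i x) / √(p x) - 1) / τ i ^ 2 = 0 := by
    simp [le_antisymm (not_lt.1 hx) (hp_nonneg x)]
  refine Tendsto.congr (fun i ↦ setIntegral_eq_integral_of_forall_compl_eq_zero (hoff i)) ?_
  refine tendsto_integral_zero_of_abs_le_of_tendsto
    (F := fun i x ↦ 3 * ((√(q i x) - √(p x)) / τ i) ^ 2) (G := fun x ↦ 3 * g x ^ 2)
    (fun i ↦ ?_) ?_ (fun i ↦ ?_) (hg.const_mul 3).restrict (fun i x ↦ ?_)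
    (ae_restrict_of_forall_mem hsupp fun x hx ↦ ((hlim x hx).pow 2).const_mul 3) ?_
    (ae_restrict_of_forall_mem hsupp fun x hx ↦
      tendsto_mul_logRemainder_sqrt_div_sq hx hτ (hlim x hx))
  · exact ((hp.mul (measurable_logRemainder.comp
      (((hq i).sqrt.div hp.sqrt).sub_const 1))).div_const _).aemeasurable
  · filter_upwards [hq_int] with i hi
    simpa only [div_pow] using
      (((integrable_sq_sqrt_sub_sqrt hi hp_int).div_const (τ i ^ 2)).const_mul 3).restrict
  · exact (((((hq i).sqrt.sub hp.sqrt).div_const _).pow_const 2).const_mul 3).aemeasurable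
  · rw [abs_div, abs_sq, div_pow, mul_div_assoc']
    gcongr
    exact abs_mul_logRemainder_sqrt_le (hp_nonneg x) (q i x)
  · simp_rw [integral_const_mul]
    exact (tendsto_setIntegral_sq_sqrt_sub_sqrt_div hp hq hp_int hq_int hlim hg hg_supp
      hupper).const_mul 3

lemma integral_mul_two_log_div_sq {f : α → ℝ} (hp : Measurable p) (hf : Measurable f)
    (hp_nonneg : ∀ x, 0 ≤ p x) (hf_nonneg : ∀ x, 0 ≤ f x) (hp_int : Integrable p μ)
    (hf_int : Integrable f μ) (hmass : ∫ x, f x ∂μ = ∫ x, p x ∂μ) (t : ℝ) :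
    (∫ x, p x * (2 * Real.log ((f x + p x) / (2 * p x))) ∂μ) / t ^ 2 =
      -(∫ x, ((√(f x) - √(p x)) / t) ^ 2 ∂μ)
        + ∫ x, p x * logRemainder (√(f x) / √(p x) - 1) / t ^ 2 ∂μ := by
  have hsq_int := integrable_sq_sqrt_sub_sqrt hf_int hp_int
  have hneg_int : Integrable (fun x ↦ -(√(f x) - √(p x)) ^ 2) μ := hsq_int.neg
  have hdiff_int : Integrable (fun x ↦ f x - p x) μ := hf_int.sub hp_int
  have hmain_int : Integrable (fun x ↦ -(√(f x) - √(p x)) ^ 2 + (f x - p x)) μ :=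
    hneg_int.add hdiff_int
  have hrem_int : Integrable (fun x ↦ p x * logRemainder (√(f x) / √(p x) - 1)) μ := by
    refine (hsq_int.const_mul 3).mono' ?_ (ae_of_all _ fun x ↦
      abs_mul_logRemainder_sqrt_le (hp_nonneg x) (f x))
    exact (hp.mul (measurable_logRemainder.comp
      ((hf.sqrt.div hp.sqrt).sub_const 1))).aestronglyMeasurable
  simp_rw [mul_two_log_eq_sqrt_expansion (hp_nonneg _) (hf_nonneg _), div_pow, integral_div]
  rw [integral_add hmain_int hrem_int, integral_add hneg_int hdiff_int,
    integral_sub hf_int hp_int, hmass, integral_neg]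
  ring

theorem tendsto_integral_mul_two_log_div_sq (hp : Measurable p) (hq : ∀ i, Measurable (q i))
    (hp_nonneg : ∀ x, 0 ≤ p x) (hq_nonneg : ∀ᶠ i in l, ∀ x, 0 ≤ q i x) (hp_int : Integrable p μ)
    (hq_int : ∀ᶠ i in l, Integrable (q i) μ) (hmass : ∀ᶠ i in l, ∫ x, q i x ∂μ = ∫ x, p x ∂μ)
    (hτ : Tendsto τ l (nhdsWithin 0 {0}ᶜ))
    (hlim : ∀ x, 0 < p x → Tendsto (fun i ↦ (√(q i x) - √(p x)) / τ i) l (nhds (g x)))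
    (hg : Integrable (fun x ↦ g x ^ 2) μ) (hg_supp : ∀ x, ¬ 0 < p x → g x = 0)
    (hupper : ∀ ε > 0, ∀ᶠ i in l,
      ∫ x, ((√(q i x) - √(p x)) / τ i) ^ 2 ∂μ < ∫ x, g x ^ 2 ∂μ + ε) :
    Tendsto (fun i ↦ (∫ x, p x * (2 * Real.log ((q i x + p x) / (2 * p x))) ∂μ) / τ i ^ 2) l
      (nhds (-∫ x, g x ^ 2 ∂μ)) := by
  have hsum := (tendsto_integral_sq_sqrt_sub_sqrt_div hp hq hp_int hq_int hlim hg hg_supp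
    hupper).neg.add (tendsto_integral_mul_logRemainder_sqrt_div_sq hp hq hp_nonneg hp_int hq_int
    hτ hlim hg hg_supp hupper)
  rw [add_zero] at hsum
  refine hsum.congr' ?_
  filter_upwards [hq_nonneg, hq_int, hmass] with i hi_nonneg hi_int hi_mass
  exact (integral_mul_two_log_div_sq hp (hq i) hp_nonneg hi_nonneg hp_int hi_int hi_mass (τ i)).symm

end HellingerExpansion

section SquaredIncrement

lemma memLp_two_of_lintegral_ofReal_sq_ne_top {α : Type*} [MeasurableSpace α] {μ : Measure α}
    {f : α → ℝ} (hf : AEStronglyMeasurable f μ)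
    (hfin : ∫⁻ x, ENNReal.ofReal (f x ^ 2) ∂μ ≠ ⊤) : MemLp f 2 μ := by
  refine (memLp_two_iff_integrable_sq hf).2 ⟨hf.pow 2, ?_⟩
  rw [hasFiniteIntegral_iff_ofReal (ae_of_all _ fun x ↦ sq_nonneg _)]
  exact lt_top_iff_ne_top.2 hfin

lemma ofReal_sq_sub_le_setLIntegral_sq_deriv {f f' : ℝ → ℝ} {c : Set ℝ} (hc : c.Countable)
    (hcont : ContinuousOn f (Icc 0 1)) (hderiv : ∀ s ∈ Ioo 0 1 \ c, HasDerivAt f (f' s) s)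
    (hmeas : Measurable f') :
    ENNReal.ofReal ((f 1 - f 0) ^ 2) ≤ ∫⁻ s in Icc (0 : ℝ) 1, ENNReal.ofReal (f' s ^ 2) := by
  rcases eq_or_ne (∫⁻ s in Icc (0 : ℝ) 1, ENNReal.ofReal (f' s ^ 2)) ⊤ with htop | hfin
  · exact htop ▸ le_top
  have : IsProbabilityMeasure (volume.restrict (Icc (0 : ℝ) 1)) := ⟨by simp⟩
  have hL2 : MemLp f' 2 (volume.restrict (Icc (0 : ℝ) 1)) :=
    memLp_two_of_lintegral_ofReal_sq_ne_top hmeas.aestronglyMeasurable hfin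
  have hint : IntegrableOn f' (Icc 0 1) := hL2.integrable one_le_two
  have hftc : ∫ s in Icc (0 : ℝ) 1, f' s = f 1 - f 0 := by
    rw [integral_Icc_eq_integral_Ioc, ← intervalIntegral.integral_of_le zero_le_one]
    refine integral_eq_of_hasDerivAt_off_countable f f' hc ?_ ?_ ?_
    · rwa [uIcc_of_le zero_le_one]
    · simpa using hderiv
    · rwa [intervalIntegrable_iff_integrableOn_Icc_of_le zero_le_one]
  have hjensen : (∫ s in Icc (0 : ℝ) 1, f' s) ^ 2 ≤ ∫ s in Icc (0 : ℝ) 1, f' s ^ 2 :=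
    even_two.convexOn_pow.map_integral_le (continuous_pow 2).continuousOn isClosed_univ
      (ae_of_all _ fun _ ↦ mem_univ _) hint hL2.integrable_sq
  rw [← hftc, ← ofReal_integral_eq_lintegral_ofReal hL2.integrable_sq
    (ae_of_all _ fun s ↦ sq_nonneg _)]
  exact ENNReal.ofReal_le_ofReal hjensen

lemma lintegral_ofReal_sq_sub_le_of_forall_lintegral_sq_deriv_le {α : Type*} [MeasurableSpace α]
    {μ : Measure α} [SFinite μ] {f f' : ℝ → α → ℝ} {M : ENNReal}
    (hmeas : Measurable (Function.uncurry f'))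
    (hcont : ∀ x, ContinuousOn (fun s ↦ f s x) (Icc 0 1))
    (hderiv : ∀ x, ∃ c : Set ℝ, c.Countable ∧
      ∀ s ∈ Ioo 0 1 \ c, HasDerivAt (fun s ↦ f s x) (f' s x) s)
    (hM : ∀ s ∈ Icc (0 : ℝ) 1, ∫⁻ x, ENNReal.ofReal (f' s x ^ 2) ∂μ ≤ M) :
    ∫⁻ x, ENNReal.ofReal ((f 1 x - f 0 x) ^ 2) ∂μ ≤ M :=
  calc ∫⁻ x, ENNReal.ofReal ((f 1 x - f 0 x) ^ 2) ∂μ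
      ≤ ∫⁻ x, (∫⁻ s in Icc (0 : ℝ) 1, ENNReal.ofReal (f' s x ^ 2)) ∂μ := by
        refine lintegral_mono fun x ↦ ?_
        obtain ⟨c, hc, hderiv_x⟩ := hderiv x
        exact ofReal_sq_sub_le_setLIntegral_sq_deriv hc (hcont x) hderiv_x
          (hmeas.comp measurable_prodMk_right)
    _ = ∫⁻ s in Icc (0 : ℝ) 1, ∫⁻ x, ENNReal.ofReal (f' s x ^ 2) ∂μ :=
        lintegral_lintegral_swap
          ((hmeas.comp measurable_swap).pow_const 2).ennreal_ofReal.aemeasurable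
    _ ≤ ∫⁻ _ in Icc (0 : ℝ) 1, M := setLIntegral_mono measurable_const hM
    _ = M := by simp

end SquaredIncrement

section Segment

variable {𝕜 E F : Type*} [NontriviallyNormedField 𝕜] [NormedAddCommGroup E] [NormedSpace 𝕜 E]
  [NormedAddCommGroup F] [NormedSpace 𝕜 F] {x h : E} {H : 𝕜 → E}

lemma tendsto_smul_nhds_zero (hH : Tendsto H (nhdsWithin 0 {0}ᶜ) (nhds h)) :
    Tendsto (fun t ↦ t • H t) (nhdsWithin 0 {0}ᶜ) (nhds 0) := by
  simpa using (tendsto_id.mono_left (nhdsWithin_le_nhds (a := (0 : 𝕜)))).smul hH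

lemma tendsto_inv_smul_sub_of_hasFDerivAt {f : E → F} {D : E →L[𝕜] F} (hf : HasFDerivAt f D x)
    (hH : Tendsto H (nhdsWithin 0 {0}ᶜ) (nhds h)) :
    Tendsto (fun t ↦ t⁻¹ • (f (x + t • H t) - f x)) (nhdsWithin 0 {0}ᶜ) (nhds (D h)) := by
  refine (hf.hasFDerivWithinAt (s := univ)).lim (tendsto_smul_nhds_zero hH)
    (Eventually.of_forall fun _ ↦ mem_univ _) (hH.congr' ?_)
  filter_upwards [self_mem_nhdsWithin] with t ht
  rw [smul_smul, inv_mul_cancel₀ ht, one_smul]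

lemma eventually_forall_segment {E : Type*} [NormedAddCommGroup E] [NormedSpace ℝ E] {θ h : E}
    {H : ℝ → E} {P : E × E → Prop}
    (hP : ∀ᶠ q in nhds (θ, h), P q) (hH : Tendsto H (nhdsWithin 0 {0}ᶜ) (nhds h)) :
    ∀ᶠ t in nhdsWithin 0 {(0 : ℝ)}ᶜ, ∀ s ∈ Icc (0 : ℝ) 1, P (θ + s • t • H t, H t) := by
  obtain ⟨r, hr, hball⟩ := Metric.eventually_nhds_iff.1 hP
  filter_upwards [Metric.tendsto_nhds.1 (tendsto_smul_nhds_zero hH) r hr,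
    Metric.tendsto_nhds.1 hH r hr] with t hincr hdir s hs
  refine hball (max_lt ?_ hdir)
  rw [dist_self_add_left]
  calc ‖s • t • H t‖ = s * ‖t • H t‖ := by rw [norm_smul, Real.norm_of_nonneg hs.1]
    _ ≤ ‖t • H t‖ := mul_le_of_le_one_left (norm_nonneg _) hs.2
    _ < r := by rwa [dist_zero_right] at hincr

lemma forall_eq_zero_or_countable_setOf_quadratic_eq_zero (a b c : ℝ) :
    (∀ s, a + b * s + c * s ^ 2 = 0) ∨ {s : ℝ | a + b * s + c * s ^ 2 = 0}.Countable := by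
  let P : Polynomial ℝ := .C a + .C b * .X + .C c * .X ^ 2
  have hroot (s : ℝ) : P.IsRoot s ↔ a + b * s + c * s ^ 2 = 0 := by simp [P, Polynomial.IsRoot]
  rcases eq_or_ne P 0 with hP | hP
  · exact Or.inl fun s ↦ (hroot s).1 (by simp [hP])
  · simp_rw [← hroot]
    exact Or.inr (Polynomial.finite_setOfPred_isRoot hP).countable

end Segment

section ExpPhi

/-- The entire function `∫₀¹ (1 - s)ⁿ e^{ws} ds`, which is `n!` times the function `φ_{n+1}` of
exponential integrators. It extends `(e^w - 1) / w` (`n = 0`) and `(e^w - 1 - w) / w ^ 2` (`n = 1`)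
continuously through `w = 0`, so that formulas for the GEV family hold uniformly in `γ`. -/
noncomputable def expPhi (n : ℕ) (w : ℝ) : ℝ := ∫ s in (0 : ℝ)..1, (1 - s) ^ n * Real.exp (w * s)

variable (n : ℕ)

@[fun_prop]
lemma continuous_expPhi : Continuous (expPhi n) :=
  intervalIntegral.continuous_parametric_intervalIntegral_of_continuous' (by fun_prop) 0 1

lemma expPhi_nonneg (w : ℝ) : 0 ≤ expPhi n w :=
  intervalIntegral.integral_nonneg zero_le_one fun _ hs ↦
    mul_nonneg (pow_nonneg (sub_nonneg.2 hs.2) n) (Real.exp_pos _).le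

lemma expPhi_le_exp {w M : ℝ} (hwM : w ≤ M) (hM : 0 ≤ M) : expPhi n w ≤ Real.exp M := by
  have hmono : expPhi n w ≤ ∫ _ in (0 : ℝ)..1, Real.exp M := by
    refine intervalIntegral.integral_mono_on zero_le_one
      (Continuous.intervalIntegrable (by fun_prop) 0 1) (by simp) fun s ⟨hs0, hs1⟩ ↦ ?_
    calc (1 - s) ^ n * Real.exp (w * s)
        ≤ 1 * Real.exp M := by
          gcongr
          · exact pow_le_one₀ (by linarith) (by linarith)
          · exact (mul_le_mul_of_nonneg_right hwM hs0).trans (mul_le_of_le_one_right hM hs1)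
      _ = Real.exp M := one_mul _
  simpa using hmono

lemma expPhi_zero_right : expPhi n 0 = ((n : ℝ) + 1)⁻¹ := by
  simp [expPhi, intervalIntegral.integral_comp_sub_left (fun s : ℝ ↦ s ^ n)]

lemma mul_expPhi_zero (w : ℝ) : w * expPhi 0 w = Real.exp w - 1 := by
  simp [expPhi]

lemma mul_expPhi_succ (w : ℝ) : w * expPhi (n + 1) w = (n + 1) * expPhi n w - 1 := by
  have hderiv (s : ℝ) : HasDerivAt (fun s ↦ (1 - s) ^ (n + 1) * Real.exp (w * s))
      (w * ((1 - s) ^ (n + 1) * Real.exp (w * s)) - (n + 1) * ((1 - s) ^ n * Real.exp (w * s)))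
      s := by
    refine ((((hasDerivAt_id s).const_sub 1).fun_pow (n + 1)).fun_mul
      ((hasDerivAt_id s).const_mul w).exp).congr_deriv ?_
    simp only [id_eq, Nat.cast_add, Nat.cast_one, add_tsub_cancel_right]
    ring
  have hftc := intervalIntegral.integral_eq_sub_of_hasDerivAt (fun s _ ↦ hderiv s)
    (Continuous.intervalIntegrable (by fun_prop) 0 1)
  rw [intervalIntegral.integral_sub (Continuous.intervalIntegrable (by fun_prop) 0 1)
    (Continuous.intervalIntegrable (by fun_prop) 0 1), intervalIntegral.integral_const_mul,
    intervalIntegral.integral_const_mul] at hftc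
  simp only [sub_self, ne_eq, Nat.add_eq_zero_iff, one_ne_zero, and_false, not_false_eq_true,
    zero_pow, zero_mul, sub_zero, one_pow, mul_zero, Real.exp_zero, mul_one, zero_sub] at hftc
  unfold expPhi
  linarith

lemma expPhi_zero_neg_mul_exp (w : ℝ) : expPhi 0 (-w) * Real.exp w = expPhi 0 w := by
  have hreflect := intervalIntegral.integral_comp_sub_left
    (fun s ↦ Real.exp (w * s)) (1 : ℝ) (a := 0) (b := 1)
  simp only [sub_self, sub_zero] at hreflect
  simp only [expPhi, pow_zero, one_mul, ← hreflect, ← intervalIntegral.integral_mul_const,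
    ← Real.exp_add]
  congr 1 with s
  ring_nf

end ExpPhi

section LogKernel

/-- The function `log (1 + w) / w`, extended continuously through `w = 0`. -/
noncomputable def logKernel (w : ℝ) : ℝ := ∫ s in (0 : ℝ)..1, (1 + w * s)⁻¹

lemma min_one_add_le_one_add_mul {w s : ℝ} (hs : s ∈ Icc (0 : ℝ) 1) :
    min 1 (1 + w) ≤ 1 + w * s := by
  rcases le_total 0 w with hw | hw
  · exact (min_le_left _ _).trans (by nlinarith [hs.1])
  · exact (min_le_right _ _).trans (by nlinarith [hs.2])

lemma one_add_mul_pos {w s : ℝ} (hw : 0 < 1 + w) (hs : s ∈ Icc (0 : ℝ) 1) : 0 < 1 + w * s :=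
  (lt_min one_pos hw).trans_le (min_one_add_le_one_add_mul hs)

variable {w : ℝ}

lemma hasDerivAt_logKernel (hw : 0 < 1 + w) :
    HasDerivAt logKernel (-∫ s in (0 : ℝ)..1, s / (1 + w * s) ^ 2) w := by
  set m := min 1 ((1 + w) / 2)
  have hm : 0 < m := lt_min one_pos (by linarith)
  have hnhds : Ioi (w - (1 + w) / 2) ∈ nhds w := Ioi_mem_nhds (by linarith)
  have hlower {v s : ℝ} (hv : v ∈ Ioi (w - (1 + w) / 2)) (hs : s ∈ Ioc (0 : ℝ) 1) :
      m ≤ 1 + v * s :=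
    (min_le_min_left 1 (by linarith [mem_Ioi.1 hv])).trans
      (min_one_add_le_one_add_mul (Ioc_subset_Icc_self hs))
  have hmeas (v : ℝ) : AEStronglyMeasurable (fun s ↦ (1 + v * s)⁻¹)
      (volume.restrict (uIoc 0 1)) := by fun_prop
  have hcont : ContinuousOn (fun s ↦ (1 + w * s)⁻¹) (uIcc 0 1) := by
    rw [uIcc_of_le zero_le_one]
    exact ContinuousOn.inv₀ (by fun_prop) fun s hs ↦ (one_add_mul_pos hw hs).ne'
  rw [← intervalIntegral.integral_neg]
  refine (intervalIntegral.hasDerivAt_integral_of_dominated_loc_of_deriv_le hnhds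
    (F' := fun v s ↦ -(s / (1 + v * s) ^ 2)) (bound := fun _ ↦ (m ^ 2)⁻¹)
    (Eventually.of_forall hmeas) hcont.intervalIntegrable
    (Measurable.aestronglyMeasurable (by fun_prop)) ?_ (by simp) ?_).2
  · refine ae_of_all _ fun s hs v hv ↦ ?_
    rw [uIoc_of_le zero_le_one] at hs
    rw [norm_neg, Real.norm_of_nonneg (by have := hs.1; positivity), ← one_div]
    gcongr
    · exact hs.2
    · exact hlower hv hs
  · refine ae_of_all _ fun s hs v hv ↦ ?_
    rw [uIoc_of_le zero_le_one] at hs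
    have hne : 1 + v * s ≠ 0 := (hm.trans_le (hlower hv hs)).ne'
    refine ((((hasDerivAt_id v).mul_const s).const_add 1).fun_inv hne).congr_deriv ?_
    simp [neg_div]

lemma mul_logKernel (hw : 0 < 1 + w) : w * logKernel w = Real.log (1 + w) := by
  have hderiv (s : ℝ) (hs : s ∈ uIcc (0 : ℝ) 1) :
      HasDerivAt (fun s ↦ Real.log (1 + w * s)) (w * (1 + w * s)⁻¹) s := by
    rw [uIcc_of_le zero_le_one] at hs
    refine ((((hasDerivAt_id s).const_mul w).const_add 1).log
      (one_add_mul_pos hw hs).ne').congr_deriv ?_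
    rw [mul_one, id_eq, div_eq_mul_inv]
  have hcont : ContinuousOn (fun s ↦ w * (1 + w * s)⁻¹) (uIcc 0 1) := by
    rw [uIcc_of_le zero_le_one]
    exact continuousOn_const.mul
      (ContinuousOn.inv₀ (by fun_prop) fun s hs ↦ (one_add_mul_pos hw hs).ne')
  have hftc := intervalIntegral.integral_eq_sub_of_hasDerivAt hderiv hcont.intervalIntegrable
  simpa [logKernel] using hftc

lemma logKernel_add_mul_deriv (hw : 0 < 1 + w) :
    logKernel w + w * -∫ s in (0 : ℝ)..1, s / (1 + w * s) ^ 2 = (1 + w)⁻¹ := by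
  have hprod : HasDerivAt (fun v ↦ v * logKernel v)
      (logKernel w + w * -∫ s in (0 : ℝ)..1, s / (1 + w * s) ^ 2) w := by
    simpa using (hasDerivAt_id w).fun_mul (hasDerivAt_logKernel hw)
  have hlog : HasDerivAt (fun v ↦ v * logKernel v) (1 + w)⁻¹ w := by
    have hloc : (fun v ↦ v * logKernel v) =ᶠ[nhds w] fun v ↦ Real.log (1 + v) := by
      filter_upwards [Ioi_mem_nhds (show -1 < w by linarith)] with v hv
      exact mul_logKernel (by linarith [mem_Ioi.1 hv])
    simpa using (((hasDerivAt_id w).const_add 1).log hw.ne').congr_of_eventuallyEq hloc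
  exact hprod.unique hlog

end LogKernel

section GevU

variable {γ z : ℝ}

lemma gevU_pos (hz : 0 < 1 + γ * z) : 0 < gevU γ z := by
  unfold gevU
  split_ifs
  · exact Real.exp_pos _
  · exact Real.rpow_pos_of_pos hz _

lemma log_gevU_zero_left (z : ℝ) : Real.log (gevU 0 z) = -z := by simp [gevU]

lemma log_gevU_of_ne_zero (hγ : γ ≠ 0) (hz : 0 < 1 + γ * z) :
    Real.log (gevU γ z) = -γ⁻¹ * Real.log (1 + γ * z) := by
  rw [gevU, if_neg hγ, Real.log_rpow hz]

lemma mul_log_gevU (hz : 0 < 1 + γ * z) : γ * Real.log (gevU γ z) = -Real.log (1 + γ * z) := by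
  rcases eq_or_ne γ 0 with rfl | hγ
  · simp
  · rw [log_gevU_of_ne_zero hγ hz]; field_simp

lemma exp_neg_mul_log_gevU (hz : 0 < 1 + γ * z) :
    Real.exp (-(γ * Real.log (gevU γ z))) = 1 + γ * z := by
  rw [mul_log_gevU hz, neg_neg, Real.exp_log hz]

lemma inv_one_add_mul_eq_exp (hz : 0 < 1 + γ * z) :
    (1 + γ * z)⁻¹ = Real.exp (γ * Real.log (gevU γ z)) := by
  rw [← exp_neg_mul_log_gevU hz, Real.exp_neg, inv_inv]

lemma log_gevU_eq_neg_mul_logKernel (hz : 0 < 1 + γ * z) :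
    Real.log (gevU γ z) = -(z * logKernel (γ * z)) := by
  rcases eq_or_ne γ 0 with rfl | hγ
  · simp [log_gevU_zero_left, logKernel]
  · rw [log_gevU_of_ne_zero hγ hz, ← mul_logKernel hz]; field_simp

lemma eq_neg_log_gevU_mul_expPhi (hz : 0 < 1 + γ * z) :
    z = -(Real.log (gevU γ z) * expPhi 0 (-(γ * Real.log (gevU γ z)))) := by
  rcases eq_or_ne γ 0 with rfl | hγ
  · simp [log_gevU_zero_left, expPhi_zero_right]
  · refine mul_left_cancel₀ hγ ?_
    linear_combination -(mul_expPhi_zero (-(γ * Real.log (gevU γ z)))) - exp_neg_mul_log_gevU hz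

lemma mul_exp_mul_log_gevU (hz : 0 < 1 + γ * z) :
    z * Real.exp (γ * Real.log (gevU γ z)) =
      -(Real.log (gevU γ z) * expPhi 0 (γ * Real.log (gevU γ z))) := by
  rw [← expPhi_zero_neg_mul_exp]
  nth_rw 1 [eq_neg_log_gevU_mul_expPhi hz]
  ring

lemma gevDGamma_eq_sq_mul (γ z : ℝ) :
    gevDGamma γ z = z ^ 2 * ∫ s in (0 : ℝ)..1, s / (1 + γ * z * s) ^ 2 := by
  have hsubst := intervalIntegral.mul_integral_comp_mul_left (a := 0) (b := 1)
    (f := fun t ↦ t / (1 + γ * t) ^ 2) (c := z)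
  rw [mul_zero, mul_one] at hsubst
  rw [gevDGamma, ← hsubst]
  simp only [mul_div_assoc, intervalIntegral.integral_const_mul, mul_assoc γ]
  ring

lemma gevDGamma_eq_log_gevU_sq_mul_expPhi (hz : 0 < 1 + γ * z) :
    gevDGamma γ z = Real.log (gevU γ z) ^ 2 * expPhi 1 (γ * Real.log (gevU γ z)) := by
  have hcancel : γ ^ 2 * gevDGamma γ z = γ ^ 2 * (Real.log (gevU γ z) ^ 2 *
      expPhi 1 (γ * Real.log (gevU γ z))) := by
    have hexp := inv_one_add_mul_eq_exp hz
    have hφ₀ := mul_expPhi_zero (γ * Real.log (gevU γ z))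
    have hφ₁ := mul_expPhi_succ 0 (γ * Real.log (gevU γ z))
    have hkernel := logKernel_add_mul_deriv hz
    have hlog := mul_logKernel hz
    have hγlog := mul_log_gevU hz
    have hinv : (1 + γ * z) * (1 + γ * z)⁻¹ = 1 := mul_inv_cancel₀ hz.ne'
    rw [gevDGamma_eq_sq_mul]
    norm_num at hφ₁
    linear_combination hlog - γ * z * hkernel - γ * Real.log (gevU γ z) * hφ₁ - hφ₀ + hexp + hγlog
      - hinv
  rcases eq_or_ne γ 0 with rfl | hγ
  · norm_num [gevDGamma, log_gevU_zero_left, expPhi_zero_right, div_eq_mul_inv]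
  · exact mul_left_cancel₀ (pow_ne_zero 2 hγ) hcancel

end GevU

section StandardScore

/-- The `γ`-component of the GEV score as a function of `γ` and of `l = log u`. -/
noncomputable def stdScoreGamma (γ l : ℝ) : ℝ :=
  (1 - Real.exp l) * (l ^ 2 * expPhi 1 (γ * l)) + l * expPhi 0 (γ * l)

/-- `σ` times the `μ`-component of the GEV score as a function of `γ` and of `l = log u`. -/
noncomputable def stdScoreMu (γ l : ℝ) : ℝ := (γ + 1 - Real.exp l) * Real.exp (γ * l)

/-- `σ` times the `σ`-component of the GEV score as a function of `γ` and of `l = log u`. -/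
noncomputable def stdScoreSigma (γ l : ℝ) : ℝ :=
  -(1 - Real.exp l) * (l * expPhi 0 (γ * l)) - Real.exp (γ * l)

/-- The score of the standard GEV family (`μ = 0`, `σ = 1`) in the direction `k`, as a function of
`γ` and of `l = log u`. -/
noncomputable def stdDirScore (γ : ℝ) (k : ℝ × ℝ × ℝ) (l : ℝ) : ℝ :=
  k.1 * stdScoreGamma γ l + k.2.1 * stdScoreMu γ l + k.2.2 * stdScoreSigma γ l

/-- A bound, up to a constant, for the standard score simultaneously for all `γ ∈ [a, b]`. -/
noncomputable def scoreEnvelope (a b l : ℝ) : ℝ :=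
  (1 + Real.exp l) * ((1 + l ^ 2) * Real.exp (max (a * l) (b * l)))

/-- The Fisher information of the standard GEV family as a quadratic form in `k`. Under the model
`u` is standard exponential, so `l = log u` has density `exp (l - exp l)`. -/
noncomputable def stdFisherForm (γ : ℝ) (k : ℝ × ℝ × ℝ) : ℝ :=
  ∫ l, stdDirScore γ k l ^ 2 * Real.exp (l - Real.exp l)

lemma continuous_stdDirScore :
    Continuous fun q : (ℝ × ℝ × ℝ × ℝ) × ℝ ↦ stdDirScore q.1.1 q.1.2 q.2 := by
  unfold stdDirScore stdScoreGamma stdScoreMu stdScoreSigma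
  fun_prop

lemma stdDirScore_smul (γ t l : ℝ) (k : ℝ × ℝ × ℝ) :
    stdDirScore γ (t • k) l = t * stdDirScore γ k l := by
  simp only [stdDirScore, Prod.smul_fst, Prod.smul_snd, smul_eq_mul]
  ring

lemma stdFisherForm_smul (γ t : ℝ) (k : ℝ × ℝ × ℝ) :
    stdFisherForm γ (t • k) = t ^ 2 * stdFisherForm γ k := by
  simp only [stdFisherForm, stdDirScore_smul, mul_pow, mul_assoc, integral_const_mul]

lemma stdFisherForm_nonneg (γ : ℝ) (k : ℝ × ℝ × ℝ) : 0 ≤ stdFisherForm γ k :=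
  integral_nonneg fun _ ↦ by positivity

lemma scoreEnvelope_nonneg (a b l : ℝ) : 0 ≤ scoreEnvelope a b l := by
  unfold scoreEnvelope
  positivity

lemma one_add_sq_mul_exp_max_le_scoreEnvelope (a b l : ℝ) :
    (1 + l ^ 2) * Real.exp (max (a * l) (b * l)) ≤ scoreEnvelope a b l :=
  le_mul_of_one_le_left (by positivity) (by linarith [Real.exp_pos l])

lemma abs_le_one_add_sq (l : ℝ) : |l| ≤ 1 + l ^ 2 := by
  nlinarith [sq_abs l, sq_nonneg (|l| - 1), abs_nonneg l]

lemma abs_one_sub_exp_le (l : ℝ) : |1 - Real.exp l| ≤ 1 + Real.exp l := by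
  rw [abs_le]
  constructor <;> linarith [Real.exp_pos l]

section Bounds

variable {a b γ : ℝ}

lemma mul_le_max_mul_mul (ha : a ≤ γ) (hb : γ ≤ b) (l : ℝ) : γ * l ≤ max (a * l) (b * l) := by
  rcases le_total l 0 with hl | hl
  · exact le_max_of_le_left (mul_le_mul_of_nonpos_right ha hl)
  · exact le_max_of_le_right (mul_le_mul_of_nonneg_right hb hl)

lemma max_mul_mul_nonneg (ha : a ≤ 0) (hb : 0 ≤ b) (l : ℝ) : 0 ≤ max (a * l) (b * l) := by
  simpa using mul_le_max_mul_mul ha hb l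

lemma exp_mul_le_one_add_sq_mul_exp_max (ha : a ≤ γ) (hb : γ ≤ b) (l : ℝ) :
    Real.exp (γ * l) ≤ (1 + l ^ 2) * Real.exp (max (a * l) (b * l)) :=
  (Real.exp_le_exp.2 (mul_le_max_mul_mul ha hb l)).trans
    (le_mul_of_one_le_left (Real.exp_pos _).le (by nlinarith [sq_nonneg l]))

lemma abs_mul_expPhi_zero_le (ha : a ≤ γ) (hb : γ ≤ b) (ha₀ : a ≤ 0) (hb₀ : 0 ≤ b) (l : ℝ) :
    |l * expPhi 0 (γ * l)| ≤ (1 + l ^ 2) * Real.exp (max (a * l) (b * l)) := by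
  rw [abs_mul, abs_of_nonneg (expPhi_nonneg 0 _)]
  gcongr
  · exact expPhi_nonneg 0 _
  · exact abs_le_one_add_sq l
  · exact expPhi_le_exp 0 (mul_le_max_mul_mul ha hb l) (max_mul_mul_nonneg ha₀ hb₀ l)

lemma abs_stdScoreGamma_le (ha : a ≤ γ) (hb : γ ≤ b) (ha₀ : a ≤ 0) (hb₀ : 0 ≤ b) (l : ℝ) :
    |stdScoreGamma γ l| ≤ 2 * scoreEnvelope a b l := by
  have hquad : |(1 - Real.exp l) * (l ^ 2 * expPhi 1 (γ * l))| ≤ scoreEnvelope a b l := by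
    rw [abs_mul, abs_of_nonneg (mul_nonneg (sq_nonneg l) (expPhi_nonneg 1 _)), scoreEnvelope]
    have hφ := expPhi_nonneg 1 (γ * l)
    gcongr
    · exact abs_one_sub_exp_le l
    · linarith
    · exact expPhi_le_exp 1 (mul_le_max_mul_mul ha hb l) (max_mul_mul_nonneg ha₀ hb₀ l)
  have hlin : |l * expPhi 0 (γ * l)| ≤ scoreEnvelope a b l :=
    (abs_mul_expPhi_zero_le ha hb ha₀ hb₀ l).trans (one_add_sq_mul_exp_max_le_scoreEnvelope a b l)
  exact (abs_add_le _ _).trans (by linarith)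

lemma abs_stdScoreMu_le (ha : a ≤ γ) (hb : γ ≤ b) (l : ℝ) :
    |stdScoreMu γ l| ≤ (|γ| + 1) * scoreEnvelope a b l := by
  have hfactor : |γ + 1 - Real.exp l| ≤ (|γ| + 1) * (1 + Real.exp l) := by
    have hγ := abs_le.1 (le_refl |γ|)
    rw [abs_le]
    constructor <;> nlinarith [Real.exp_pos l, abs_nonneg γ]
  rw [stdScoreMu, abs_mul, Real.abs_exp, scoreEnvelope, ← mul_assoc]
  gcongr
  exact exp_mul_le_one_add_sq_mul_exp_max ha hb l

lemma abs_stdScoreSigma_le (ha : a ≤ γ) (hb : γ ≤ b) (ha₀ : a ≤ 0) (hb₀ : 0 ≤ b) (l : ℝ) :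
    |stdScoreSigma γ l| ≤ 2 * scoreEnvelope a b l := by
  have hlin : |-(1 - Real.exp l) * (l * expPhi 0 (γ * l))| ≤ scoreEnvelope a b l := by
    rw [abs_mul, abs_neg, scoreEnvelope]
    gcongr
    · exact abs_one_sub_exp_le l
    · exact abs_mul_expPhi_zero_le ha hb ha₀ hb₀ l
  have hexp : |Real.exp (γ * l)| ≤ scoreEnvelope a b l := by
    rw [Real.abs_exp]
    exact (exp_mul_le_one_add_sq_mul_exp_max ha hb l).trans
      (one_add_sq_mul_exp_max_le_scoreEnvelope a b l)
  exact (abs_sub _ _).trans (by linarith)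

lemma abs_stdDirScore_le (ha : a ≤ γ) (hb : γ ≤ b) (ha₀ : a ≤ 0) (hb₀ : 0 ≤ b)
    (k : ℝ × ℝ × ℝ) (l : ℝ) :
    |stdDirScore γ k l| ≤ (|γ| + 5) * ‖k‖ * scoreEnvelope a b l :=
  calc |stdDirScore γ k l|
      ≤ |k.1| * |stdScoreGamma γ l| + |k.2.1| * |stdScoreMu γ l|
          + |k.2.2| * |stdScoreSigma γ l| := by
        simpa only [abs_mul, stdDirScore] using abs_add_three (k.1 * stdScoreGamma γ l)
          (k.2.1 * stdScoreMu γ l) (k.2.2 * stdScoreSigma γ l)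
    _ ≤ ‖k‖ * (2 * scoreEnvelope a b l) + ‖k‖ * ((|γ| + 1) * scoreEnvelope a b l)
          + ‖k‖ * (2 * scoreEnvelope a b l) := by
        gcongr
        · exact norm_fst_le k
        · exact abs_stdScoreGamma_le ha hb ha₀ hb₀ l
        · exact (norm_fst_le k.2).trans (norm_snd_le k)
        · exact abs_stdScoreMu_le ha hb l
        · exact (norm_snd_le k.2).trans (norm_snd_le k)
        · exact abs_stdScoreSigma_le ha hb ha₀ hb₀ l
    _ = (|γ| + 5) * ‖k‖ * scoreEnvelope a b l := by ring

lemma one_add_sq_le_mul_exp_neg {ε l : ℝ} (hε : 0 < ε) (hl : l ≤ 0) :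
    1 + l ^ 2 ≤ (1 + 2 / ε ^ 2) * Real.exp (-ε * l) := by
  have hexp := Real.quadratic_le_exp_of_nonneg (x := -ε * l) (by nlinarith)
  have hsq : l ^ 2 ≤ 2 / ε ^ 2 * Real.exp (-ε * l) := by
    rw [div_mul_eq_mul_div, le_div_iff₀ (by positivity)]
    nlinarith
  have hone : 1 ≤ Real.exp (-ε * l) := Real.one_le_exp (by nlinarith)
  linarith

lemma continuous_scoreEnvelope_sq_mul_exp (a b : ℝ) :
    Continuous fun l ↦ scoreEnvelope a b l ^ 2 * Real.exp (l - Real.exp l) := by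
  unfold scoreEnvelope
  fun_prop

-- As `l → -∞` the integrand is of order `l ^ 4 * exp ((2 * a + 1) * l)`: here `γ > -1/2` enters.
lemma integrableOn_scoreEnvelope_sq_mul_exp_Iic (ha : -(1 / 2) < a) (hab : a ≤ b) :
    IntegrableOn (fun l ↦ scoreEnvelope a b l ^ 2 * Real.exp (l - Real.exp l)) (Iic 0) := by
  obtain ⟨ε, hε, hεa⟩ : ∃ ε : ℝ, 0 < ε ∧ 1 + 2 * a = 4 * ε :=
    ⟨(1 + 2 * a) / 4, by linarith, by ring⟩
  have hdom : IntegrableOn (fun l ↦ 4 * (1 + 2 / ε ^ 2) ^ 2 * Real.exp (2 * ε * l)) (Iic 0) :=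
    (integrableOn_exp_mul_Iic (by positivity) 0).const_mul _
  refine hdom.mono' (continuous_scoreEnvelope_sq_mul_exp a b).aestronglyMeasurable
    ((ae_restrict_iff' measurableSet_Iic).2 (ae_of_all _ fun l (hl : l ≤ 0) ↦ ?_))
  have hmax : max (a * l) (b * l) = a * l := max_eq_left (mul_le_mul_of_nonpos_right hab hl)
  have hexp_le : 1 + Real.exp l ≤ 2 := by linarith [Real.exp_le_one_iff.2 hl]
  have hweight : l - Real.exp l ≤ l := by linarith [Real.exp_pos l]
  rw [Real.norm_of_nonneg (by positivity), scoreEnvelope, hmax]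
  calc ((1 + Real.exp l) * ((1 + l ^ 2) * Real.exp (a * l))) ^ 2 * Real.exp (l - Real.exp l)
      ≤ (2 * ((1 + 2 / ε ^ 2) * Real.exp (-ε * l) * Real.exp (a * l))) ^ 2 * Real.exp l := by
        gcongr
        exact one_add_sq_le_mul_exp_neg hε hl
    _ = 4 * (1 + 2 / ε ^ 2) ^ 2 * ((Real.exp (-ε * l) * Real.exp (a * l)) ^ 2 * Real.exp l) := by
        ring
    _ = 4 * (1 + 2 / ε ^ 2) ^ 2 * Real.exp (2 * ε * l) := by
        rw [← Real.exp_add, ← Real.exp_nat_mul, ← Real.exp_add]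
        congr 2
        push_cast
        linear_combination l * hεa

lemma integrableOn_scoreEnvelope_sq_mul_exp_Ioi (hab : a ≤ b) :
    IntegrableOn (fun l ↦ scoreEnvelope a b l ^ 2 * Real.exp (l - Real.exp l)) (Ioi 0) := by
  obtain ⟨n, hn⟩ := exists_nat_gt b
  set N := 2 * n + 6
  have hdom : IntegrableOn (fun l ↦ 16 * N.factorial * Real.exp (-l)) (Ioi 0) :=
    (integrableOn_exp_neg_Ioi 0).const_mul _
  refine hdom.mono' (continuous_scoreEnvelope_sq_mul_exp a b).aestronglyMeasurable
    ((ae_restrict_iff' measurableSet_Ioi).2 (ae_of_all _ fun l (hl : 0 < l) ↦ ?_))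
  have hmax : max (a * l) (b * l) = b * l := max_eq_right (mul_le_mul_of_nonneg_right hab hl.le)
  have hsq : 1 + l ^ 2 ≤ 2 * Real.exp l := by
    nlinarith [Real.quadratic_le_exp_of_nonneg hl.le]
  have hexp_le : 1 + Real.exp l ≤ 2 * Real.exp l := by linarith [Real.one_le_exp hl.le]
  have hpow : Real.exp l ^ N ≤ Real.exp (Real.exp l) * N.factorial :=
    (div_le_iff₀ (by positivity)).1 (Real.pow_div_factorial_le_exp _ (Real.exp_pos l).le N)
  rw [Real.norm_of_nonneg (by positivity), scoreEnvelope, hmax]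
  calc ((1 + Real.exp l) * ((1 + l ^ 2) * Real.exp (b * l))) ^ 2 * Real.exp (l - Real.exp l)
      ≤ (2 * Real.exp l * (2 * Real.exp l * Real.exp (n * l))) ^ 2 * Real.exp (l - Real.exp l) := by
        gcongr
    _ = 16 * Real.exp l ^ N * Real.exp (-Real.exp l) * Real.exp (-l) := by
        rw [Real.exp_sub, Real.exp_neg, Real.exp_neg, Real.exp_nat_mul]
        field_simp
        ring
    _ ≤ 16 * (Real.exp (Real.exp l) * N.factorial) * Real.exp (-Real.exp l) * Real.exp (-l) := by
        gcongr
    _ = 16 * N.factorial * Real.exp (-l) := by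
        rw [Real.exp_neg (Real.exp l)]
        field_simp

lemma integrable_scoreEnvelope_sq_mul_exp (ha : -(1 / 2) < a) (hab : a ≤ b) :
    Integrable fun l ↦ scoreEnvelope a b l ^ 2 * Real.exp (l - Real.exp l) := by
  rw [← integrableOn_univ, ← Iic_union_Ioi (a := (0 : ℝ))]
  exact (integrableOn_scoreEnvelope_sq_mul_exp_Iic ha hab).union
    (integrableOn_scoreEnvelope_sq_mul_exp_Ioi hab)

end Bounds

variable {γ : ℝ}

lemma exists_integrable_eventually_stdDirScore_sq_le (hγ : -(1 / 2) < γ) (k : ℝ × ℝ × ℝ) :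
    ∃ F : ℝ → ℝ, Integrable F ∧ ∀ᶠ q : ℝ × ℝ × ℝ × ℝ in nhds (γ, k), ∀ l,
      stdDirScore q.1 q.2 l ^ 2 * Real.exp (l - Real.exp l) ≤ F l := by
  obtain ⟨a, ha, ha_lt⟩ : ∃ a, -(1 / 2) < a ∧ a < min γ 0 :=
    exists_between (lt_min hγ (by norm_num))
  obtain ⟨b, hb_lt⟩ := exists_gt (max γ 0)
  obtain ⟨haγ, ha₀⟩ := lt_min_iff.1 ha_lt
  obtain ⟨hγb, hb₀⟩ := max_lt_iff.1 hb_lt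
  obtain ⟨C, hC⟩ := exists_gt ((|γ| + 5) * ‖k‖)
  refine ⟨_, (integrable_scoreEnvelope_sq_mul_exp ha (ha₀.trans hb₀).le).const_mul (C ^ 2), ?_⟩
  have hfst : Tendsto (fun q : ℝ × ℝ × ℝ × ℝ ↦ q.1) (nhds (γ, k)) (nhds γ) := continuousAt_fst
  have hconst : Tendsto (fun q : ℝ × ℝ × ℝ × ℝ ↦ (|q.1| + 5) * ‖q.2‖) (nhds (γ, k))
      (nhds ((|γ| + 5) * ‖k‖)) :=
    Continuous.tendsto (by fun_prop : Continuous fun q : ℝ × ℝ × ℝ × ℝ ↦ (|q.1| + 5) * ‖q.2‖) (γ, k)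
  filter_upwards [hfst.eventually_const_lt haγ, hfst.eventually_lt_const hγb,
    hconst.eventually_lt_const hC] with q haq hqb hqC l
  have hle : |stdDirScore q.1 q.2 l| ≤ C * scoreEnvelope a b l :=
    (abs_stdDirScore_le haq.le hqb.le ha₀.le hb₀.le q.2 l).trans
      (mul_le_mul_of_nonneg_right hqC.le (scoreEnvelope_nonneg a b l))
  rw [← mul_assoc, ← mul_pow, ← sq_abs (stdDirScore _ _ _)]
  gcongr

lemma continuous_stdDirScore_sq_mul_exp (γ : ℝ) (k : ℝ × ℝ × ℝ) :
    Continuous fun l ↦ stdDirScore γ k l ^ 2 * Real.exp (l - Real.exp l) :=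
  ((continuous_stdDirScore.comp (Continuous.prodMk_right (γ, k))).pow 2).mul (by fun_prop)

lemma integrable_stdDirScore_sq_mul_exp (hγ : -(1 / 2) < γ) (k : ℝ × ℝ × ℝ) :
    Integrable fun l ↦ stdDirScore γ k l ^ 2 * Real.exp (l - Real.exp l) := by
  obtain ⟨F, hF, hle⟩ := exists_integrable_eventually_stdDirScore_sq_le hγ k
  refine hF.mono' (continuous_stdDirScore_sq_mul_exp γ k).aestronglyMeasurable
    (ae_of_all _ fun l ↦ ?_)
  rw [Real.norm_of_nonneg (by positivity)]
  exact hle.self_of_nhds l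

lemma continuousAt_stdFisherForm (hγ : -(1 / 2) < γ) (k : ℝ × ℝ × ℝ) :
    ContinuousAt (fun q : ℝ × ℝ × ℝ × ℝ ↦ stdFisherForm q.1 q.2) (γ, k) := by
  obtain ⟨F, hF, hle⟩ := exists_integrable_eventually_stdDirScore_sq_le hγ k
  refine continuousAt_of_dominated (bound := F) (Eventually.of_forall fun q ↦
    (continuous_stdDirScore_sq_mul_exp q.1 q.2).aestronglyMeasurable) ?_ hF
    (ae_of_all _ fun l ↦ ?_)
  · filter_upwards [hle] with q hq
    refine ae_of_all _ fun l ↦ ?_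
    rw [Real.norm_of_nonneg (by positivity)]
    exact hq l
  · exact (((continuous_stdDirScore.comp (Continuous.prodMk_left l)).pow 2).mul
      continuous_const).continuousAt

end StandardScore

section Support

/-- The support `S_θ` of the GEV distribution. -/
def gevSupport (θ : ℝ × ℝ × ℝ) : Set ℝ := {x | 0 < θ.2.2 + θ.1 * (x - θ.2.1)}

/-- `log u_γ((x - μ) / σ)`, the coordinate in which the law of the sample is free of `θ`. -/
noncomputable def gevLogU (θ : ℝ × ℝ × ℝ) (x : ℝ) : ℝ :=
  Real.log (gevU θ.1 ((x - θ.2.1) / θ.2.2))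

/-- The log-density `ℓ_θ(x)` of the GEV distribution; meaningful for `x ∈ gevSupport θ` only. -/
noncomputable def gevLogDensity (θ : ℝ × ℝ × ℝ) (x : ℝ) : ℝ :=
  -Real.log θ.2.2 - Real.exp (gevLogU θ x) + (θ.1 + 1) * gevLogU θ x

variable {θ : ℝ × ℝ × ℝ} {x : ℝ}

lemma mem_gevSupport_iff (hσ : 0 < θ.2.2) :
    x ∈ gevSupport θ ↔ 0 < 1 + θ.1 * ((x - θ.2.1) / θ.2.2) := by
  have hfactor : θ.2.2 + θ.1 * (x - θ.2.1) = θ.2.2 * (1 + θ.1 * ((x - θ.2.1) / θ.2.2)) := by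
    field_simp
  rw [gevSupport, mem_ofPred_eq, hfactor, mul_pos_iff_of_pos_left hσ]

lemma gevDensity_of_notMem (hx : x ∉ gevSupport θ) : gevDensity θ x = 0 := if_neg hx

lemma exp_gevLogDensity (hσ : 0 < θ.2.2) (hx : x ∈ gevSupport θ) :
    Real.exp (gevLogDensity θ x) = gevDensity θ x := by
  have hu := gevU_pos ((mem_gevSupport_iff hσ).1 hx)
  rw [gevDensity, if_pos (by exact hx), Real.rpow_def_of_pos hu, gevLogDensity, gevLogU,
    Real.exp_add, sub_eq_add_neg, Real.exp_add, Real.exp_neg (Real.log θ.2.2), Real.exp_log hσ,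
    Real.exp_log hu, mul_comm (θ.1 + 1)]

lemma gevDensity_pos_iff (hσ : 0 < θ.2.2) : 0 < gevDensity θ x ↔ x ∈ gevSupport θ := by
  refine ⟨fun hpos ↦ ?_, fun hx ↦ exp_gevLogDensity hσ hx ▸ Real.exp_pos _⟩
  by_contra hx
  exact hpos.ne' (gevDensity_of_notMem hx)

lemma gevDensity_nonneg (hσ : 0 < θ.2.2) (x : ℝ) : 0 ≤ gevDensity θ x := by
  by_cases hx : x ∈ gevSupport θ
  · exact ((gevDensity_pos_iff hσ).2 hx).le
  · exact (gevDensity_of_notMem hx).ge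

lemma sqrt_gevDensity (hσ : 0 < θ.2.2) (hx : x ∈ gevSupport θ) :
    √(gevDensity θ x) = Real.exp (gevLogDensity θ x / 2) := by
  rw [← exp_gevLogDensity hσ hx, Real.exp_half]

lemma measurable_gevU : Measurable fun q : ℝ × ℝ ↦ gevU q.1 q.2 :=
  Measurable.ite (measurableSet_eq_fun measurable_fst measurable_const) (by fun_prop) (by fun_prop)

lemma measurable_gevU_standardized :
    Measurable fun q : (ℝ × ℝ × ℝ) × ℝ ↦ gevU q.1.1 ((q.2 - q.1.2.1) / q.1.2.2) :=
  measurable_gevU.comp (by fun_prop :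
    Measurable fun q : (ℝ × ℝ × ℝ) × ℝ ↦ (q.1.1, (q.2 - q.1.2.1) / q.1.2.2))

lemma measurable_gevLogU : Measurable fun q : (ℝ × ℝ × ℝ) × ℝ ↦ gevLogU q.1 q.2 :=
  measurable_gevU_standardized.log

lemma measurable_uncurry_gevDensity :
    Measurable fun q : (ℝ × ℝ × ℝ) × ℝ ↦ gevDensity q.1 q.2 := by
  have hu := measurable_gevU_standardized
  exact Measurable.ite (measurableSet_lt measurable_const (by fun_prop)) (by fun_prop)
    measurable_const

lemma measurable_gevDensity (θ : ℝ × ℝ × ℝ) : Measurable (gevDensity θ) :=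
  measurable_uncurry_gevDensity.comp measurable_prodMk_left

end Support

section Score

/-- The parameter direction `k` at `θ` in units of the scale parameter of `θ`. -/
noncomputable def scaledDir (θ k : ℝ × ℝ × ℝ) : ℝ × ℝ × ℝ := (k.1, k.2.1 / θ.2.2, k.2.2 / θ.2.2)

/-- The derivative of `θ ↦ √p_θ(x)` in the direction `k`. -/
noncomputable def sqrtDensityDeriv (θ k : ℝ × ℝ × ℝ) (x : ℝ) : ℝ :=
  √(gevDensity θ x) / 2 * stdDirScore θ.1 (scaledDir θ k) (gevLogU θ x)

lemma scaledDir_smul (θ k : ℝ × ℝ × ℝ) (t : ℝ) : scaledDir θ (t • k) = t • scaledDir θ k := by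
  simp [scaledDir, mul_div_assoc]

lemma sqrtDensityDeriv_of_notMem {θ : ℝ × ℝ × ℝ} {x : ℝ} (k : ℝ × ℝ × ℝ)
    (hx : x ∉ gevSupport θ) : sqrtDensityDeriv θ k x = 0 := by
  simp [sqrtDensityDeriv, gevDensity_of_notMem hx]

lemma measurable_sqrtDensityDeriv (k : ℝ × ℝ × ℝ) :
    Measurable fun q : (ℝ × ℝ × ℝ) × ℝ ↦ sqrtDensityDeriv q.1 k q.2 := by
  have hscore : Measurable fun q : (ℝ × ℝ × ℝ) × ℝ ↦
      stdDirScore q.1.1 (scaledDir q.1 k) (gevLogU q.1 q.2) :=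
    continuous_stdDirScore.measurable.comp
      (Measurable.prodMk (Measurable.prodMk (by fun_prop) (by fun_prop))
        measurable_gevLogU)
  exact (measurable_uncurry_gevDensity.sqrt.div_const 2).mul hscore

variable {θ : ℝ × ℝ × ℝ} {x : ℝ}

lemma dotProduct_gevScore (hσ : 0 < θ.2.2) (hx : x ∈ gevSupport θ) (k : ℝ × ℝ × ℝ) :
    toVec3 k ⬝ᵥ gevScore θ x = stdDirScore θ.1 (scaledDir θ k) (gevLogU θ x) := by
  have hz := (mem_gevSupport_iff hσ).1 hx
  have hinv := inv_one_add_mul_eq_exp hz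
  have hzexp := mul_exp_mul_log_gevU hz
  rw [gevScore, if_pos (by exact hx)]
  simp only [toVec3, Matrix.vec3_dotProduct, Matrix.cons_val, gevScoreGamma, gevScoreMu,
    gevScoreSigma, stdDirScore, stdScoreGamma, stdScoreMu, stdScoreSigma, scaledDir, gevLogU,
    gevDGamma_eq_log_gevU_sq_mul_expPhi hz, Real.exp_log (gevU_pos hz),
    div_eq_mul_inv _ (θ.2.2 * _), div_eq_mul_inv ((x - _) / _), mul_inv, hinv]
  linear_combination
    (k.2.2 / θ.2.2 * (1 - gevU θ.1 ((x - θ.2.1) / θ.2.2)) - k.1) * hzexp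

lemma eventually_mem_gevSupport (hσ : 0 < θ.2.2) (hx : x ∈ gevSupport θ) :
    ∀ᶠ θ' in nhds θ, 0 < θ'.2.2 ∧ x ∈ gevSupport θ' :=
  ((continuous_snd.comp continuous_snd).continuousAt.eventually_const_lt hσ).and
    ((by fun_prop : Continuous fun θ' : ℝ × ℝ × ℝ ↦ θ'.2.2 + θ'.1 * (x - θ'.2.1)).continuousAt
      |>.eventually_const_lt hx)

lemma exists_hasFDerivAt_gevLogU (hσ : 0 < θ.2.2) (hx : x ∈ gevSupport θ) :
    ∃ D : (ℝ × ℝ × ℝ) →L[ℝ] ℝ, HasFDerivAt (fun θ ↦ gevLogU θ x) D θ ∧ ∀ k,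
      D k = k.1 * gevDGamma θ.1 ((x - θ.2.1) / θ.2.2)
        + (k.2.1 + k.2.2 * ((x - θ.2.1) / θ.2.2)) / θ.2.2
          * (1 + θ.1 * ((x - θ.2.1) / θ.2.2))⁻¹ := by
  have hz := (mem_gevSupport_iff hσ).1 hx
  have hfst : HasFDerivAt (fun θ : ℝ × ℝ × ℝ ↦ θ.1) (.fst ℝ ℝ (ℝ × ℝ)) θ := hasFDerivAt_fst
  have hloc : HasFDerivAt (fun θ : ℝ × ℝ × ℝ ↦ θ.2.1)
      (.comp (.fst ℝ ℝ ℝ) (.snd ℝ ℝ (ℝ × ℝ))) θ := hasFDerivAt_fst.comp θ hasFDerivAt_snd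
  have hscale : HasFDerivAt (fun θ : ℝ × ℝ × ℝ ↦ θ.2.2)
      (.comp (.snd ℝ ℝ ℝ) (.snd ℝ ℝ (ℝ × ℝ))) θ := hasFDerivAt_snd.comp θ hasFDerivAt_snd
  have hstd : HasFDerivAt (fun θ : ℝ × ℝ × ℝ ↦ (x - θ.2.1) * θ.2.2⁻¹) _ θ :=
    ((hloc.const_sub x).mul ((hasDerivAt_inv hσ.ne').comp_hasFDerivAt θ hscale))
  have hkernel := (hasDerivAt_logKernel hz).comp_hasFDerivAt θ (hfst.mul hstd)
  refine ⟨_, (hstd.mul hkernel).neg.congr_of_eventuallyEq ?_, fun k ↦ ?_⟩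
  · filter_upwards [eventually_mem_gevSupport hσ hx] with θ' ⟨hσ', hx'⟩
    exact log_gevU_eq_neg_mul_logKernel ((mem_gevSupport_iff hσ').1 hx')
  · rw [← logKernel_add_mul_deriv hz, gevDGamma_eq_sq_mul]
    simp only [_root_.add_apply, _root_.neg_apply, _root_.smul_apply, Pi.mul_apply,
      Function.comp_apply, ContinuousLinearMap.comp_apply, ContinuousLinearMap.coe_snd',
      ContinuousLinearMap.coe_fst', smul_eq_mul, ← div_eq_mul_inv]
    ring

lemma exists_hasFDerivAt_gevLogDensity (hσ : 0 < θ.2.2) (hx : x ∈ gevSupport θ) :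
    ∃ D : (ℝ × ℝ × ℝ) →L[ℝ] ℝ, HasFDerivAt (fun θ ↦ gevLogDensity θ x) D θ ∧
      ∀ k, D k = stdDirScore θ.1 (scaledDir θ k) (gevLogU θ x) := by
  have hz := (mem_gevSupport_iff hσ).1 hx
  obtain ⟨D, hD, hD_apply⟩ := exists_hasFDerivAt_gevLogU hσ hx
  have hfst : HasFDerivAt (fun θ : ℝ × ℝ × ℝ ↦ θ.1) (.fst ℝ ℝ (ℝ × ℝ)) θ := hasFDerivAt_fst
  have hscale : HasFDerivAt (fun θ : ℝ × ℝ × ℝ ↦ θ.2.2)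
      (.comp (.snd ℝ ℝ ℝ) (.snd ℝ ℝ (ℝ × ℝ))) θ := hasFDerivAt_snd.comp θ hasFDerivAt_snd
  refine ⟨_, ((hscale.log hσ.ne').neg.sub hD.exp).add ((hfst.add_const 1).mul hD), fun k ↦ ?_⟩
  have hφ : θ.1 * gevLogU θ x * expPhi 1 (θ.1 * gevLogU θ x)
      = expPhi 0 (θ.1 * gevLogU θ x) - 1 := by
    simpa using mul_expPhi_succ 0 (θ.1 * gevLogU θ x)
  have hzexp : (x - θ.2.1) / θ.2.2 * Real.exp (θ.1 * gevLogU θ x)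
      = -(gevLogU θ x * expPhi 0 (θ.1 * gevLogU θ x)) := mul_exp_mul_log_gevU hz
  have hdγ : gevDGamma θ.1 ((x - θ.2.1) / θ.2.2)
      = gevLogU θ x ^ 2 * expPhi 1 (θ.1 * gevLogU θ x) := gevDGamma_eq_log_gevU_sq_mul_expPhi hz
  have hinv : (1 + θ.1 * ((x - θ.2.1) / θ.2.2))⁻¹ = Real.exp (θ.1 * gevLogU θ x) :=
    inv_one_add_mul_eq_exp hz
  have hunit := inv_mul_cancel₀ hz.ne'
  rw [hinv] at hunit
  simp only [_root_.add_apply, _root_.sub_apply, _root_.neg_apply, _root_.smul_apply,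
    ContinuousLinearMap.comp_apply, ContinuousLinearMap.coe_snd', ContinuousLinearMap.coe_fst',
    smul_eq_mul, hD_apply, hdγ, hinv, stdDirScore, stdScoreGamma, stdScoreMu, stdScoreSigma,
    scaledDir]
  linear_combination k.1 * gevLogU θ x * hφ
    + k.2.2 / θ.2.2 * ((1 - Real.exp (gevLogU θ x)) * hzexp + hunit)

lemma exists_hasFDerivAt_sqrt_gevDensity (hσ : 0 < θ.2.2) (hx : x ∈ gevSupport θ) :
    ∃ D : (ℝ × ℝ × ℝ) →L[ℝ] ℝ, HasFDerivAt (fun θ ↦ √(gevDensity θ x)) D θ ∧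
      ∀ k, D k = sqrtDensityDeriv θ k x := by
  obtain ⟨D, hD, hD_apply⟩ := exists_hasFDerivAt_gevLogDensity hσ hx
  refine ⟨_, (hD.mul_const 2⁻¹).exp.congr_of_eventuallyEq ?_, fun k ↦ ?_⟩
  · filter_upwards [eventually_mem_gevSupport hσ hx] with θ' ⟨hσ', hx'⟩
    exact sqrt_gevDensity hσ' hx'
  · rw [sqrtDensityDeriv, sqrt_gevDensity hσ hx]
    simp only [_root_.smul_apply, hD_apply, smul_eq_mul, div_eq_mul_inv]
    ring

end Score

section ChangeOfVariables

/-- The inverse of `gevLogU θ`: the point `x` of the support with `log u_γ((x - μ) / σ) = l`. -/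
noncomputable def gevOfLogU (θ : ℝ × ℝ × ℝ) (l : ℝ) : ℝ :=
  θ.2.1 - θ.2.2 * ∫ t in (0 : ℝ)..l, Real.exp (-(θ.1 * t))

lemma intervalIntegral_exp_neg_mul (γ l : ℝ) :
    ∫ t in (0 : ℝ)..l, Real.exp (-(γ * t)) = l * expPhi 0 (-(γ * l)) := by
  have hsubst := intervalIntegral.mul_integral_comp_mul_left (a := 0) (b := 1)
    (f := fun t ↦ Real.exp (-(γ * t))) l
  rw [mul_zero, mul_one] at hsubst
  rw [← hsubst, expPhi]
  congr 2 with s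
  rw [pow_zero, one_mul, neg_mul, mul_assoc]

lemma hasDerivAt_gevOfLogU (θ : ℝ × ℝ × ℝ) (l : ℝ) :
    HasDerivAt (gevOfLogU θ) (-(θ.2.2 * Real.exp (-(θ.1 * l)))) l :=
  (((by fun_prop : Continuous fun t ↦ Real.exp (-(θ.1 * t))).integral_hasStrictDerivAt
    0 l).hasDerivAt.const_mul θ.2.2).const_sub θ.2.1

variable {θ : ℝ × ℝ × ℝ}

lemma gevOfLogU_standardized (hσ : 0 < θ.2.2) (l : ℝ) :
    (gevOfLogU θ l - θ.2.1) / θ.2.2 = -(l * expPhi 0 (-(θ.1 * l))) := by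
  rw [gevOfLogU, intervalIntegral_exp_neg_mul]
  field_simp
  ring

lemma one_add_mul_gevOfLogU_standardized (hσ : 0 < θ.2.2) (l : ℝ) :
    1 + θ.1 * ((gevOfLogU θ l - θ.2.1) / θ.2.2) = Real.exp (-(θ.1 * l)) := by
  rw [gevOfLogU_standardized hσ]
  linear_combination mul_expPhi_zero (-(θ.1 * l))

lemma gevOfLogU_mem_gevSupport (hσ : 0 < θ.2.2) (l : ℝ) : gevOfLogU θ l ∈ gevSupport θ := by
  rw [mem_gevSupport_iff hσ, one_add_mul_gevOfLogU_standardized hσ]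
  exact Real.exp_pos _

lemma gevLogU_gevOfLogU (hσ : 0 < θ.2.2) (l : ℝ) : gevLogU θ (gevOfLogU θ l) = l := by
  have hz := one_add_mul_gevOfLogU_standardized hσ l
  rcases eq_or_ne θ.1 0 with hγ | hγ
  · rw [gevLogU, gevOfLogU_standardized hσ, hγ, log_gevU_zero_left]
    simp [expPhi_zero_right]
  · have hmul := mul_log_gevU (hz ▸ Real.exp_pos _)
    rw [hz, Real.log_exp, neg_neg] at hmul
    exact mul_left_cancel₀ hγ hmul

lemma gevOfLogU_gevLogU {x : ℝ} (hσ : 0 < θ.2.2) (hx : x ∈ gevSupport θ) :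
    gevOfLogU θ (gevLogU θ x) = x := by
  have hz : (x - θ.2.1) / θ.2.2 = -(gevLogU θ x * expPhi 0 (-(θ.1 * gevLogU θ x))) :=
    eq_neg_log_gevU_mul_expPhi ((mem_gevSupport_iff hσ).1 hx)
  rw [← gevOfLogU_standardized hσ, div_left_inj' hσ.ne'] at hz
  exact (sub_left_inj.1 hz).symm

lemma image_gevOfLogU_univ (hσ : 0 < θ.2.2) : gevOfLogU θ '' univ = gevSupport θ := by
  refine Subset.antisymm ?_ fun x hx ↦ ⟨gevLogU θ x, trivial, gevOfLogU_gevLogU hσ hx⟩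
  rintro _ ⟨l, -, rfl⟩
  exact gevOfLogU_mem_gevSupport hσ l

lemma injective_gevOfLogU (hσ : 0 < θ.2.2) : Function.Injective (gevOfLogU θ) :=
  Function.LeftInverse.injective (gevLogU_gevOfLogU hσ)

lemma abs_deriv_mul_gevDensity_gevOfLogU (hσ : 0 < θ.2.2) (l : ℝ) :
    |-(θ.2.2 * Real.exp (-(θ.1 * l)))| * gevDensity θ (gevOfLogU θ l)
      = Real.exp (l - Real.exp l) := by
  rw [abs_neg, abs_of_pos (by positivity), ← exp_gevLogDensity hσ (gevOfLogU_mem_gevSupport hσ l),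
    gevLogDensity, gevLogU_gevOfLogU hσ]
  nth_rw 1 [← Real.exp_log hσ]
  rw [← Real.exp_add, ← Real.exp_add]
  ring_nf

lemma integrable_comp_gevLogU_mul_gevDensity_iff (hσ : 0 < θ.2.2) (G : ℝ → ℝ) :
    Integrable (fun x ↦ G (gevLogU θ x) * gevDensity θ x) ↔
      Integrable (fun l ↦ G l * Real.exp (l - Real.exp l)) := by
  have hsupp : Function.support (fun x ↦ G (gevLogU θ x) * gevDensity θ x) ⊆ gevSupport θ :=
    fun x hx ↦ of_not_not fun hnot ↦ hx (by simp [gevDensity_of_notMem hnot])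
  rw [← integrableOn_iff_integrable_of_support_subset hsupp, ← image_gevOfLogU_univ hσ,
    integrableOn_image_iff_integrableOn_abs_deriv_smul MeasurableSet.univ
      (fun l _ ↦ (hasDerivAt_gevOfLogU θ l).hasDerivWithinAt) (injective_gevOfLogU hσ).injOn,
    integrableOn_univ]
  simp only [smul_eq_mul, gevLogU_gevOfLogU hσ, mul_left_comm _ (G _),
    abs_deriv_mul_gevDensity_gevOfLogU hσ]

lemma integral_comp_gevLogU_mul_gevDensity (hσ : 0 < θ.2.2) (G : ℝ → ℝ) :
    ∫ x, G (gevLogU θ x) * gevDensity θ x = ∫ l, G l * Real.exp (l - Real.exp l) := by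
  rw [← setIntegral_eq_integral_of_forall_compl_eq_zero (s := gevSupport θ)
      (fun x hx ↦ by rw [gevDensity_of_notMem hx, mul_zero]), ← image_gevOfLogU_univ hσ,
    integral_image_eq_integral_abs_deriv_smul MeasurableSet.univ
      (fun l _ ↦ (hasDerivAt_gevOfLogU θ l).hasDerivWithinAt) (injective_gevOfLogU hσ).injOn,
    setIntegral_univ]
  simp only [smul_eq_mul, gevLogU_gevOfLogU hσ, mul_left_comm _ (G _),
    abs_deriv_mul_gevDensity_gevOfLogU hσ]

lemma hasDerivAt_neg_exp_neg_exp (l : ℝ) :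
    HasDerivAt (fun l ↦ -Real.exp (-Real.exp l)) (Real.exp (l - Real.exp l)) l := by
  refine (Real.hasDerivAt_exp l).fun_neg.exp.neg.congr_deriv ?_
  rw [sub_eq_add_neg, Real.exp_add]
  ring

lemma tendsto_neg_exp_neg_exp_atBot :
    Tendsto (fun l ↦ -Real.exp (-Real.exp l)) atBot (nhds (-1)) := by
  simpa using ((Real.continuous_exp.tendsto _).comp Real.tendsto_exp_atBot.neg).neg

lemma tendsto_neg_exp_neg_exp_atTop :
    Tendsto (fun l ↦ -Real.exp (-Real.exp l)) atTop (nhds 0) := by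
  simpa using
    (Real.tendsto_exp_atBot.comp (tendsto_neg_atTop_atBot.comp Real.tendsto_exp_atTop)).neg

lemma integrable_exp_sub_exp : Integrable fun l : ℝ ↦ Real.exp (l - Real.exp l) := by
  rw [← integrableOn_univ, ← Iic_union_Ioi (a := (0 : ℝ))]
  refine IntegrableOn.union ?_ ?_
  · refine (integrableOn_exp_Iic 0).mono' (by fun_prop) (ae_of_all _ fun l ↦ ?_)
    rw [Real.norm_eq_abs, Real.abs_exp]
    exact Real.exp_le_exp.2 (by linarith [Real.exp_pos l])
  · exact integrableOn_Ioi_deriv_of_nonneg' (fun l _ ↦ hasDerivAt_neg_exp_neg_exp l)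
      (fun l _ ↦ (Real.exp_pos _).le) tendsto_neg_exp_neg_exp_atTop

lemma integral_exp_sub_exp : ∫ l : ℝ, Real.exp (l - Real.exp l) = 1 := by
  rw [integral_of_hasDerivAt_of_tendsto hasDerivAt_neg_exp_neg_exp integrable_exp_sub_exp
    tendsto_neg_exp_neg_exp_atBot tendsto_neg_exp_neg_exp_atTop]
  norm_num

lemma integrable_gevDensity (hσ : 0 < θ.2.2) : Integrable (gevDensity θ) := by
  simpa using (integrable_comp_gevLogU_mul_gevDensity_iff hσ fun _ ↦ 1).2
    (by simpa using integrable_exp_sub_exp)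

lemma integral_gevDensity (hσ : 0 < θ.2.2) : ∫ x, gevDensity θ x = 1 := by
  simpa [integral_exp_sub_exp] using integral_comp_gevLogU_mul_gevDensity hσ fun _ ↦ 1

lemma sqrtDensityDeriv_sq (hσ : 0 < θ.2.2) (k : ℝ × ℝ × ℝ) (x : ℝ) :
    sqrtDensityDeriv θ k x ^ 2
      = 1 / 4 * (stdDirScore θ.1 (scaledDir θ k) (gevLogU θ x) ^ 2 * gevDensity θ x) := by
  rw [sqrtDensityDeriv, mul_pow, div_pow, Real.sq_sqrt (gevDensity_nonneg hσ x)]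
  ring

lemma integrable_sqrtDensityDeriv_sq (hγ : -(1 / 2) < θ.1) (hσ : 0 < θ.2.2) (k : ℝ × ℝ × ℝ) :
    Integrable fun x ↦ sqrtDensityDeriv θ k x ^ 2 := by
  simp only [sqrtDensityDeriv_sq hσ]
  exact ((integrable_comp_gevLogU_mul_gevDensity_iff hσ _).2
    (integrable_stdDirScore_sq_mul_exp hγ (scaledDir θ k))).const_mul _

lemma integral_sqrtDensityDeriv_sq (hσ : 0 < θ.2.2) (k : ℝ × ℝ × ℝ) :
    ∫ x, sqrtDensityDeriv θ k x ^ 2 = 1 / 4 * stdFisherForm θ.1 (scaledDir θ k) := by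
  simp only [sqrtDensityDeriv_sq hσ, integral_const_mul, stdFisherForm,
    integral_comp_gevLogU_mul_gevDensity hσ fun l ↦ stdDirScore θ.1 (scaledDir θ k) l ^ 2]

end ChangeOfVariables

section Continuity

lemma tendsto_mul_sub_exp_atBot_of_tendsto_atTop {α : Type*} {l : Filter α} {c y : α → ℝ} {c₀ : ℝ}
    (hc : Tendsto c l (nhds c₀)) (hy : Tendsto y l atTop) :
    Tendsto (fun i ↦ c i * y i - Real.exp (y i)) l atBot := by
  have hratio : Tendsto (fun i ↦ c i - Real.exp (y i) / y i ^ 1) l atBot :=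
    hc.add_atBot (tendsto_neg_atTop_atBot.comp ((Real.tendsto_exp_div_pow_atTop 1).comp hy))
  refine (hy.atTop_mul_atBot₀ hratio).congr' ?_
  filter_upwards [hy.eventually_ne_atTop 0] with i hi
  field_simp

lemma tendsto_mul_sub_exp_atBot_of_tendsto_atBot {α : Type*} {l : Filter α} {c y : α → ℝ} {c₀ : ℝ}
    (hc : Tendsto c l (nhds c₀)) (hc₀ : 0 < c₀) (hy : Tendsto y l atBot) :
    Tendsto (fun i ↦ c i * y i - Real.exp (y i)) l atBot :=
  (hc.pos_mul_atBot hc₀ hy).atBot_add (Real.tendsto_exp_atBot.comp hy).neg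

variable {θ : ℝ × ℝ × ℝ} {x : ℝ}

lemma tendsto_mul_gevLogU_atTop_of_boundary (hσ : 0 < θ.2.2)
    (hx : θ.2.2 + θ.1 * (x - θ.2.1) = 0) :
    Tendsto (fun θ' ↦ θ'.1 * gevLogU θ' x) (nhdsWithin θ {θ' | x ∈ gevSupport θ'}) atTop := by
  have hwithin : ∀ᶠ θ' in nhdsWithin θ {θ' | x ∈ gevSupport θ'},
      0 < 1 + θ'.1 * ((x - θ'.2.1) / θ'.2.2) := by
    filter_upwards [self_mem_nhdsWithin, nhdsWithin_le_nhds
      ((continuous_snd.comp continuous_snd).continuousAt.eventually_const_lt hσ)] with θ' hx' hσ'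
    exact (mem_gevSupport_iff hσ').1 hx'
  have hlim : Tendsto (fun θ' : ℝ × ℝ × ℝ ↦ 1 + θ'.1 * ((x - θ'.2.1) / θ'.2.2))
      (nhdsWithin θ {θ' | x ∈ gevSupport θ'}) (nhds 0) := by
    have hcont : ContinuousAt (fun θ' : ℝ × ℝ × ℝ ↦ 1 + θ'.1 * ((x - θ'.2.1) / θ'.2.2)) θ := by
      fun_prop (disch := exact hσ.ne')
    have hzero : 1 + θ.1 * ((x - θ.2.1) / θ.2.2) = 0 := by
      field_simp
      simpa using hx
    exact hzero ▸ hcont.mono_left nhdsWithin_le_nhds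
  have hlog := tendsto_neg_atBot_atTop.comp (Real.tendsto_log_nhdsGT_zero.comp
    (tendsto_nhdsWithin_iff.2 ⟨hlim, hwithin⟩))
  refine hlog.congr' ?_
  filter_upwards [hwithin] with θ' hz'
  exact (mul_log_gevU hz').symm

lemma tendsto_gevLogDensity_atBot_of_boundary (hγ : -1 < θ.1) (hσ : 0 < θ.2.2)
    (hx : θ.2.2 + θ.1 * (x - θ.2.1) = 0) :
    Tendsto (fun θ' ↦ gevLogDensity θ' x) (nhdsWithin θ {θ' | x ∈ gevSupport θ'}) atBot := by
  set l := nhdsWithin θ {θ' : ℝ × ℝ × ℝ | x ∈ gevSupport θ'}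
  have hγ₀ : θ.1 ≠ 0 := fun hzero ↦ hσ.ne' (by simpa [hzero] using hx)
  have hshape : Tendsto (fun θ' : ℝ × ℝ × ℝ ↦ θ'.1) l (nhds θ.1) :=
    continuousAt_fst.mono_left nhdsWithin_le_nhds
  have hscale : Tendsto (fun θ' : ℝ × ℝ × ℝ ↦ θ'.2.2) l (nhds θ.2.2) :=
    (continuous_snd.comp continuous_snd).continuousAt.mono_left nhdsWithin_le_nhds
  have hcoeff := hshape.add_const 1
  have hlogU : (fun θ' : ℝ × ℝ × ℝ ↦ θ'.1⁻¹ * (θ'.1 * gevLogU θ' x)) =ᶠ[l]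
      fun θ' ↦ gevLogU θ' x := by
    filter_upwards [hshape.eventually_ne hγ₀] with θ' hγ'
    exact inv_mul_cancel_left₀ hγ' _
  have hmul := tendsto_mul_gevLogU_atTop_of_boundary hσ hx
  have hmain : Tendsto (fun θ' ↦ (θ'.1 + 1) * gevLogU θ' x - Real.exp (gevLogU θ' x)) l atBot := by
    rcases hγ₀.lt_or_gt with hneg | hpos
    · exact tendsto_mul_sub_exp_atBot_of_tendsto_atBot hcoeff (by linarith)
        (((hshape.inv₀ hγ₀).neg_mul_atTop (inv_lt_zero.2 hneg) hmul).congr' hlogU)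
    · exact tendsto_mul_sub_exp_atBot_of_tendsto_atTop hcoeff
        (((hshape.inv₀ hγ₀).pos_mul_atTop (inv_pos.2 hpos) hmul).congr' hlogU)
  refine ((hscale.log hσ.ne').neg.add_atBot hmain).congr fun θ' ↦ ?_
  rw [gevLogDensity]
  ring

lemma continuousAt_gevDensity_of_boundary (hγ : -1 < θ.1) (hσ : 0 < θ.2.2)
    (hx : θ.2.2 + θ.1 * (x - θ.2.1) = 0) : ContinuousAt (fun θ' ↦ gevDensity θ' x) θ := by
  rw [ContinuousAt, gevDensity_of_notMem (θ := θ) (x := x) (by exact hx.le.not_gt),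
    ← nhdsWithin_univ, ← union_compl_self {θ' | x ∈ gevSupport θ'}, nhdsWithin_union]
  refine Tendsto.sup ?_ ?_
  · refine (Real.tendsto_exp_atBot.comp
      (tendsto_gevLogDensity_atBot_of_boundary hγ hσ hx)).congr' ?_
    filter_upwards [self_mem_nhdsWithin, nhdsWithin_le_nhds
      ((continuous_snd.comp continuous_snd).continuousAt.eventually_const_lt hσ)] with θ' hx' hσ'
    exact exp_gevLogDensity hσ' hx'
  · refine tendsto_const_nhds.congr' ?_
    filter_upwards [self_mem_nhdsWithin] with θ' hx'
    exact (gevDensity_of_notMem hx').symm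

lemma eventually_gevDensity_eq_zero (hx : θ.2.2 + θ.1 * (x - θ.2.1) < 0) :
    ∀ᶠ θ' in nhds θ, gevDensity θ' x = 0 := by
  filter_upwards [(by fun_prop : Continuous fun θ' : ℝ × ℝ × ℝ ↦ θ'.2.2 + θ'.1 * (x - θ'.2.1))
    |>.continuousAt.eventually_lt_const hx] with θ' hx'
  exact gevDensity_of_notMem hx'.not_gt

lemma continuousAt_sqrt_gevDensity (hγ : -1 < θ.1) (hσ : 0 < θ.2.2) (x : ℝ) :
    ContinuousAt (fun θ' ↦ √(gevDensity θ' x)) θ := by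
  rcases lt_trichotomy (θ.2.2 + θ.1 * (x - θ.2.1)) 0 with hneg | hzero | hpos
  · exact (continuousAt_const.congr
      ((eventually_gevDensity_eq_zero hneg).mono fun _ h ↦ h.symm)).sqrt
  · exact (continuousAt_gevDensity_of_boundary hγ hσ hzero).sqrt
  · obtain ⟨_, hD, -⟩ := exists_hasFDerivAt_sqrt_gevDensity hσ hpos
    exact hD.continuousAt

end Continuity

section HellingerBound

lemma exists_countable_hasDerivAt_sqrt_gevDensity_segment {θ δ : ℝ × ℝ × ℝ}
    (hσ : ∀ s ∈ Icc (0 : ℝ) 1, 0 < (θ + s • δ).2.2) (x : ℝ) :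
    ∃ c : Set ℝ, c.Countable ∧ ∀ s ∈ Ioo 0 1 \ c,
      HasDerivAt (fun s : ℝ ↦ √(gevDensity (θ + s • δ) x))
        (sqrtDensityDeriv (θ + s • δ) δ x) s := by
  -- The zeros of this polynomial in `s` are where `x` meets the endpoint of the support.
  have hquad (s : ℝ) : (θ + s • δ).2.2 + (θ + s • δ).1 * (x - (θ + s • δ).2.1)
      = θ.2.2 + θ.1 * (x - θ.2.1) + (δ.2.2 + δ.1 * (x - θ.2.1) - θ.1 * δ.2.1) * s
        + -(δ.1 * δ.2.1) * s ^ 2 := by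
    simp only [Prod.fst_add, Prod.snd_add, Prod.smul_fst, Prod.smul_snd, smul_eq_mul]
    ring
  rcases forall_eq_zero_or_countable_setOf_quadratic_eq_zero (θ.2.2 + θ.1 * (x - θ.2.1))
    (δ.2.2 + δ.1 * (x - θ.2.1) - θ.1 * δ.2.1) (-(δ.1 * δ.2.1)) with hzero | hcountable
  · have hnotMem (s : ℝ) : x ∉ gevSupport (θ + s • δ) := ((hquad s).trans (hzero s)).not_gt
    refine ⟨∅, countable_empty, fun s _ ↦ ?_⟩
    simpa only [gevDensity_of_notMem (hnotMem _), sqrtDensityDeriv_of_notMem δ (hnotMem _)]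
      using hasDerivAt_const s √(0 : ℝ)
  refine ⟨_, hcountable, fun s ⟨hs, hroot⟩ ↦ ?_⟩
  have hsegment : HasDerivAt (fun s : ℝ ↦ θ + s • δ) δ s := by
    simpa using ((hasDerivAt_id s).smul_const δ).const_add θ
  rw [mem_ofPred_eq, ← hquad] at hroot
  rcases lt_or_gt_of_ne hroot with hneg | hpos
  · rw [sqrtDensityDeriv_of_notMem δ hneg.not_gt]
    refine (hasDerivAt_const s √(0 : ℝ)).congr_of_eventuallyEq ?_
    filter_upwards [hsegment.continuousAt.eventually (eventually_gevDensity_eq_zero hneg)]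
      with s' hs'
    rw [hs']
  · obtain ⟨D, hD, hD_apply⟩ :=
      exists_hasFDerivAt_sqrt_gevDensity (hσ s (Ioo_subset_Icc_self hs)) hpos
    rw [← hD_apply]
    exact hD.comp_hasDerivAt s hsegment

lemma lintegral_ofReal_sqrtDensityDeriv_sq {θ : ℝ × ℝ × ℝ} (hγ : -(1 / 2) < θ.1)
    (hσ : 0 < θ.2.2) (k : ℝ × ℝ × ℝ) :
    ∫⁻ x, ENNReal.ofReal (sqrtDensityDeriv θ k x ^ 2)
      = ENNReal.ofReal (1 / 4 * stdFisherForm θ.1 (scaledDir θ k)) := by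
  rw [← integral_sqrtDensityDeriv_sq hσ k, ofReal_integral_eq_lintegral_ofReal
    (integrable_sqrtDensityDeriv_sq hγ hσ k) (ae_of_all _ fun x ↦ sq_nonneg _)]

lemma integral_sq_sqrt_gevDensity_sub_le {θ δ : ℝ × ℝ × ℝ} {M : ℝ}
    (hsegment : ∀ s ∈ Icc (0 : ℝ) 1, -(1 / 2) < (θ + s • δ).1 ∧ 0 < (θ + s • δ).2.2 ∧
      stdFisherForm (θ + s • δ).1 (scaledDir (θ + s • δ) δ) ≤ M) :
    ∫ x, (√(gevDensity (θ + δ) x) - √(gevDensity θ x)) ^ 2 ≤ 1 / 4 * M := by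
  have hM : 0 ≤ M := (stdFisherForm_nonneg _ _).trans (hsegment 0 (by simp)).2.2
  have hmeas : Measurable fun x ↦ (√(gevDensity (θ + δ) x) - √(gevDensity θ x)) ^ 2 :=
    ((measurable_gevDensity _).sqrt.sub (measurable_gevDensity _).sqrt).pow_const 2
  have hlintegral : ∫⁻ x, ENNReal.ofReal ((√(gevDensity (θ + δ) x) - √(gevDensity θ x)) ^ 2)
      ≤ ENNReal.ofReal (1 / 4 * M) := by
    simpa only [one_smul, zero_smul, add_zero] using
      lintegral_ofReal_sq_sub_le_of_forall_lintegral_sq_deriv_le (μ := volume)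
      (f := fun s x ↦ √(gevDensity (θ + s • δ) x))
      (f' := fun s x ↦ sqrtDensityDeriv (θ + s • δ) δ x)
      ((measurable_sqrtDensityDeriv δ).comp
        (by fun_prop : Measurable fun q : ℝ × ℝ ↦ (θ + q.1 • δ, q.2)))
      (fun x s hs ↦ (ContinuousAt.comp (f := fun s : ℝ ↦ θ + s • δ)
        (continuousAt_sqrt_gevDensity (by linarith [(hsegment s hs).1]) (hsegment s hs).2.1 x)
        (by fun_prop)).continuousWithinAt)
      (exists_countable_hasDerivAt_sqrt_gevDensity_segment fun s hs ↦ (hsegment s hs).2.1)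
      (fun s hs ↦ by
        obtain ⟨hγ, hσ, hle⟩ := hsegment s hs
        rw [lintegral_ofReal_sqrtDensityDeriv_sq hγ hσ]
        exact ENNReal.ofReal_le_ofReal (by gcongr))
  rw [integral_eq_lintegral_of_nonneg_ae (ae_of_all _ fun x ↦ sq_nonneg _)
    hmeas.aestronglyMeasurable]
  exact ENNReal.toReal_le_of_le_ofReal (by positivity) hlintegral

variable {θ h : ℝ × ℝ × ℝ} {H : ℝ → ℝ × ℝ × ℝ}

lemma continuousAt_stdFisherForm_scaledDir (hγ : -(1 / 2) < θ.1) (hσ : 0 < θ.2.2) :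
    ContinuousAt (fun q : (ℝ × ℝ × ℝ) × ℝ × ℝ × ℝ ↦ stdFisherForm q.1.1 (scaledDir q.1 q.2))
      (θ, h) := by
  have hdir : ContinuousAt (fun q : (ℝ × ℝ × ℝ) × ℝ × ℝ × ℝ ↦ (q.1.1, scaledDir q.1 q.2))
      (θ, h) := by
    unfold scaledDir
    fun_prop (disch := exact hσ.ne')
  exact ContinuousAt.comp (f := fun q : (ℝ × ℝ × ℝ) × ℝ × ℝ × ℝ ↦ (q.1.1, scaledDir q.1 q.2))
    (continuousAt_stdFisherForm hγ (scaledDir θ h)) hdir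

lemma eventually_integral_sq_sqrt_gevDensity_sub_div_lt (hγ : -(1 / 2) < θ.1) (hσ : 0 < θ.2.2)
    (hH : Tendsto H (nhdsWithin 0 {0}ᶜ) (nhds h)) {ε : ℝ} (hε : 0 < ε) :
    ∀ᶠ t in nhdsWithin 0 {(0 : ℝ)}ᶜ,
      ∫ x, ((√(gevDensity (θ + t • H t) x) - √(gevDensity θ x)) / t) ^ 2
        < (∫ x, sqrtDensityDeriv θ h x ^ 2) + ε := by
  set J := stdFisherForm θ.1 (scaledDir θ h)
  have hshape : Tendsto (fun q : (ℝ × ℝ × ℝ) × ℝ × ℝ × ℝ ↦ q.1.1) (nhds (θ, h)) (nhds θ.1) :=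
    continuousAt_fst.fst
  have hscale : Tendsto (fun q : (ℝ × ℝ × ℝ) × ℝ × ℝ × ℝ ↦ q.1.2.2) (nhds (θ, h)) (nhds θ.2.2) :=
    continuousAt_fst.snd.snd
  have hform : Tendsto (fun q : (ℝ × ℝ × ℝ) × ℝ × ℝ × ℝ ↦ stdFisherForm q.1.1 (scaledDir q.1 q.2))
      (nhds (θ, h)) (nhds J) := continuousAt_stdFisherForm_scaledDir hγ hσ
  have hlocal := (hshape.eventually_const_lt hγ).and ((hscale.eventually_const_lt hσ).and
    (hform.eventually_lt_const (lt_add_of_pos_right J hε)))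
  filter_upwards [eventually_forall_segment hlocal hH, self_mem_nhdsWithin] with t hsegment ht
  have hbound : ∫ x, (√(gevDensity (θ + t • H t) x) - √(gevDensity θ x)) ^ 2
      ≤ 1 / 4 * (t ^ 2 * (J + ε)) := by
    refine integral_sq_sqrt_gevDensity_sub_le fun s hs ↦ ?_
    obtain ⟨hγ', hσ', hlt⟩ := hsegment s hs
    rw [scaledDir_smul, stdFisherForm_smul]
    exact ⟨hγ', hσ', by gcongr⟩
  have ht_sq : 0 < t ^ 2 := sq_pos_of_ne_zero ht
  simp only [div_pow, integral_div, integral_sqrtDensityDeriv_sq hσ]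
  rw [div_lt_iff₀ ht_sq]
  linarith [mul_pos ht_sq hε]

lemma tendsto_sqrt_gevDensity_sub_div (hσ : 0 < θ.2.2)
    (hH : Tendsto H (nhdsWithin 0 {0}ᶜ) (nhds h)) {x : ℝ} (hx : x ∈ gevSupport θ) :
    Tendsto (fun t ↦ (√(gevDensity (θ + t • H t) x) - √(gevDensity θ x)) / t)
      (nhdsWithin 0 {0}ᶜ) (nhds (sqrtDensityDeriv θ h x)) := by
  obtain ⟨D, hD, hD_apply⟩ := exists_hasFDerivAt_sqrt_gevDensity hσ hx
  simpa only [hD_apply, smul_eq_mul, ← div_eq_inv_mul]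
    using tendsto_inv_smul_sub_of_hasFDerivAt hD hH

end HellingerBound

section FisherInformation

lemma dotProduct_mulVec_integral_mul {α ι : Type*} [MeasurableSpace α] [Fintype ι]
    {μ : Measure α} {v : α → ι → ℝ} (hv : ∀ i, MemLp (fun x ↦ v x i) 2 μ) (w : ι → ℝ) :
    w ⬝ᵥ (Matrix.of fun i j ↦ ∫ x, v x i * v x j ∂μ) *ᵥ w = ∫ x, (w ⬝ᵥ v x) ^ 2 ∂μ := by
  have hint (i j : ι) : Integrable (fun x ↦ w i * v x i * (w j * v x j)) μ :=
    ((hv i).const_mul (w i)).integrable_mul ((hv j).const_mul (w j))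
  simp only [dotProduct, sq, Finset.sum_mul_sum]
  rw [integral_finsetSum _ fun i _ ↦ integrable_finsetSum _ fun j _ ↦ hint i j]
  refine Finset.sum_congr rfl fun i _ ↦ ?_
  rw [integral_finsetSum _ fun j _ ↦ hint i j, Matrix.mulVec, dotProduct, Finset.mul_sum]
  refine Finset.sum_congr rfl fun j _ ↦ ?_
  rw [Matrix.of_apply, mul_comm _ (w j), ← integral_const_mul, ← integral_const_mul]
  congr 1 with x
  ring

variable {θ : ℝ × ℝ × ℝ}

lemma integral_gevMeasure (hσ : 0 < θ.2.2) (f : ℝ → ℝ) :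
    ∫ x, f x ∂gevMeasure θ = ∫ x, gevDensity θ x * f x := by
  rw [gevMeasure, integral_withDensity_eq_integral_toReal_smul
    (measurable_gevDensity θ).ennreal_ofReal (ae_of_all _ fun x ↦ ENNReal.ofReal_lt_top)]
  simp only [ENNReal.toReal_ofReal (gevDensity_nonneg hσ _), smul_eq_mul]

lemma integrable_gevMeasure_iff (hσ : 0 < θ.2.2) {f : ℝ → ℝ} :
    Integrable f (gevMeasure θ) ↔ Integrable fun x ↦ f x * gevDensity θ x := by
  rw [gevMeasure, integrable_withDensity_iff (measurable_gevDensity θ).ennreal_ofReal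
    (ae_of_all _ fun x ↦ ENNReal.ofReal_lt_top)]
  simp only [ENNReal.toReal_ofReal (gevDensity_nonneg hσ _)]

lemma ae_mem_gevSupport : ∀ᵐ x ∂gevMeasure θ, x ∈ gevSupport θ := by
  rw [gevMeasure, ae_withDensity_iff (measurable_gevDensity θ).ennreal_ofReal]
  refine ae_of_all _ fun x hx ↦ ?_
  by_contra hmem
  exact hx (by rw [gevDensity_of_notMem hmem, ENNReal.ofReal_zero])

lemma dotProduct_gevScore_ae_eq (hσ : 0 < θ.2.2) (k : ℝ × ℝ × ℝ) :
    (fun x ↦ toVec3 k ⬝ᵥ gevScore θ x)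
      =ᵐ[gevMeasure θ] fun x ↦ stdDirScore θ.1 (scaledDir θ k) (gevLogU θ x) := by
  filter_upwards [ae_mem_gevSupport] with x hx using dotProduct_gevScore hσ hx k

lemma memLp_two_dotProduct_gevScore (hγ : -(1 / 2) < θ.1) (hσ : 0 < θ.2.2) (k : ℝ × ℝ × ℝ) :
    MemLp (fun x ↦ toVec3 k ⬝ᵥ gevScore θ x) 2 (gevMeasure θ) := by
  have hmeas : Measurable fun x ↦ stdDirScore θ.1 (scaledDir θ k) (gevLogU θ x) :=
    (continuous_stdDirScore.comp (Continuous.prodMk_right (θ.1, scaledDir θ k))).measurable.comp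
      (measurable_gevLogU.comp measurable_prodMk_left)
  rw [memLp_congr_ae (dotProduct_gevScore_ae_eq hσ k),
    memLp_two_iff_integrable_sq hmeas.aestronglyMeasurable, integrable_gevMeasure_iff hσ]
  exact (integrable_comp_gevLogU_mul_gevDensity_iff hσ _).2
    (integrable_stdDirScore_sq_mul_exp hγ (scaledDir θ k))

lemma memLp_two_gevScore (hγ : -(1 / 2) < θ.1) (hσ : 0 < θ.2.2) (i : Fin 3) :
    MemLp (fun x ↦ gevScore θ x i) 2 (gevMeasure θ) := by
  have hcoord : ∃ k : ℝ × ℝ × ℝ, toVec3 k = Pi.single i 1 :=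
    ⟨(Pi.single (M := fun _ ↦ ℝ) i 1 0, Pi.single (M := fun _ ↦ ℝ) i 1 1,
      Pi.single (M := fun _ ↦ ℝ) i 1 2), by ext j; fin_cases j <;> rfl⟩
  obtain ⟨k, hk⟩ := hcoord
  simpa [hk] using memLp_two_dotProduct_gevScore hγ hσ k

lemma dotProduct_gevFisher_mulVec (hγ : -(1 / 2) < θ.1) (hσ : 0 < θ.2.2) (k : ℝ × ℝ × ℝ) :
    toVec3 k ⬝ᵥ (gevFisher θ).mulVec (toVec3 k) = 4 * ∫ x, sqrtDensityDeriv θ k x ^ 2 := by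
  have hscore : (fun x ↦ (toVec3 k ⬝ᵥ gevScore θ x) ^ 2) =ᵐ[gevMeasure θ]
      fun x ↦ stdDirScore θ.1 (scaledDir θ k) (gevLogU θ x) ^ 2 :=
    (dotProduct_gevScore_ae_eq hσ k).fun_comp (· ^ 2)
  rw [gevFisher, dotProduct_mulVec_integral_mul (memLp_two_gevScore hγ hσ),
    integral_congr_ae hscore, integral_gevMeasure hσ, ← integral_const_mul]
  congr 1 with x
  rw [sqrtDensityDeriv_sq hσ]
  ring

lemma gevM_self (θ : ℝ × ℝ × ℝ) (x : ℝ) : gevM θ θ x = 0 := by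
  rw [gevM, ← two_mul]
  rcases eq_or_ne (2 * gevDensity θ x) 0 with hzero | hne
  · simp [hzero]
  · simp [div_self hne]

end FisherInformation

/-- **Second-order expansion of `θ ↦ P_{θ₀} m_θ` at `θ₀`**: for `γ₀ > −1/2` and any
`h_t → h` in `ℝ³` as `t → 0`,
`t⁻² ∫ (m_{θ₀ + t h_t} − m_{θ₀}) dP_{θ₀} → −(1/4) hᵀ I_{θ₀} h`. -/
theorem gev_m_second_order (θ₀ : ℝ × ℝ × ℝ) (hγ : -(1/2) < θ₀.1) (hσ : 0 < θ₀.2.2)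
    (h : ℝ × ℝ × ℝ) (H : ℝ → ℝ × ℝ × ℝ)
    (hH : Filter.Tendsto H (nhdsWithin 0 {(0 : ℝ)}ᶜ) (nhds h)) :
    Filter.Tendsto
      (fun t : ℝ =>
        (∫ x, (gevM θ₀ (θ₀ + t • H t) x - gevM θ₀ θ₀ x) ∂(gevMeasure θ₀)) / t ^ 2)
      (nhdsWithin 0 {(0 : ℝ)}ᶜ)
      (nhds (-(1 / 4) * (toVec3 h ⬝ᵥ (gevFisher θ₀).mulVec (toVec3 h)))) := by
  have hθ : Tendsto (fun t ↦ θ₀ + t • H t) (nhdsWithin 0 {(0 : ℝ)}ᶜ) (nhds θ₀) := by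
    simpa using (tendsto_smul_nhds_zero hH).const_add θ₀
  have hscale := hθ.snd_nhds.snd_nhds.eventually_const_lt hσ
  have hlimit : -(1 / 4) * (toVec3 h ⬝ᵥ (gevFisher θ₀).mulVec (toVec3 h))
      = -∫ x, sqrtDensityDeriv θ₀ h x ^ 2 := by
    rw [dotProduct_gevFisher_mulVec hγ hσ]
    ring
  simp only [hlimit, integral_gevMeasure hσ, gevM_self, sub_zero]
  refine tendsto_integral_mul_two_log_div_sq (measurable_gevDensity θ₀)
    (fun t ↦ measurable_gevDensity _) (gevDensity_nonneg hσ) (hscale.mono fun t ↦ gevDensity_nonneg)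
    (integrable_gevDensity hσ) (hscale.mono fun t ↦ integrable_gevDensity) ?_ tendsto_id
    (fun x hx ↦ tendsto_sqrt_gevDensity_sub_div hσ hH ((gevDensity_pos_iff hσ).1 hx))
    (integrable_sqrtDensityDeriv_sq hγ hσ h)
    (fun x hx ↦ sqrtDensityDeriv_of_notMem h (mt (gevDensity_pos_iff hσ).2 hx))
    fun ε hε ↦ eventually_integral_sq_sqrt_gevDensity_sub_div_lt hγ hσ hH hε
  exact hscale.mono fun t ht ↦ (integral_gevDensity ht).trans (integral_gevDensity hσ).symm
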